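/- Let J be a nilpotent Jordan superalgebra over ℂ of type (2,3). Then J is isomorphic, via a grading-preserving algebra isomorphism, to one of the following superalgebras, each given on a homogeneous basis {e₁, e₂; f₁, f₂, f₃} (e_i even, f_j odd): (1) all products zero; (2) f₁f₂=e₁; (3) f₁f₂=e₁, f₁f₃=e₂; (4) e₁f₂=f₁; (5) e₁f₂=f₁, f₁f₂=e₂; (6) e₁f₂=f₁, f₂f₃=e₂; (7) e₁f₂=f₁, f₁f₃=e₂; (8) e₁f₂=f₁, f₂f₃=e₁; (9) e₁f₂=f₁, f₁f₂=e₂, f₂f₃=e₁; (10) e₁f₂=f₁, f₁f₃=e₂, f₂f₃=e₁; (11) e₁f₂=f₁, e₂f₃=f₁; (12) e₁f₂=f₁, e₂f₃=f₁, f₂f₃=e₂; (13) e₁f₂=f₁, e₂f₂=f₃; (14) e₁f₂=f₁, e₂f₂=f₃, f₁f₂=e₂; (15) e₁f₂=f₁, e₂f₃=f₂; (16) e₁f₂=f₁, e₁f₃=f₂; (17) e₁f₂=f₁, e₁f₃=f₂, f₂f₃=e₂; (18) e₁f₂=f₁, e₁f₃=f₂, f₁f₃=e₂; (19) e₁f₂=e₂f₃=f₁,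 e₁f₃=f₂; (20) e₁f₂=e₂f₃=f₁, e₁f₃=f₂, f₂f₃=e₂; (21) e₁²=e₂; (22) e₁²=e₂, f₁f₂=e₁; (23) e₁²=e₂, f₁f₂=e₂; (24) e₁²=e₂, f₁f₂=e₁, f₁f₃=e₂; (25) e₁²=e₂, e₁f₂=f₁; (26) e₁²=e₂, e₁f₂=f₁, f₂f₃=e₂; (27) e₁²=e₂, e₁f₂=f₁, f₁f₂=e₂; (28) e₁²=e₂, e₁f₂=f₁, f₁f₃=e₂; (29) e₁²=e₂, e₁f₂=f₁, f₂f₃=e₁; (30) e₁²=e₂, e₁f₂=f₁, f₁f₂=e₂, f₂f₃=e₁; (31^λ) e₁²=e₂, e₁f₂=f₁, f₁f₃=λe₂, f₂f₃=e₁, for λ ∈ ℂ∖{0}; (32) e₁²=e₂, e₁f₂=f₁, e₁f₃=f₂; (33) e₁²=e₂, e₁f₂=f₁, e₁f₃=f₂, f₁f₃=e₂; (34) e₁²=e₂, e₁f₂=f₁, e₁f₃=f₂, f₂f₃=e₂; (35) e₁²=e₂, e₂f₂=f₁; (36) e₁²=e₂, e₂f₂=f₁, f₂f₃=e₂; (37)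 e₁²=e₂, e₂f₂=f₁, f₂f₃=e₁; (38) e₁²=e₂, e₁f₂=e₂f₂=f₁, f₂f₃=e₁; (39) e₁²=e₂, e₁f₃=e₂f₂=f₁; (40) e₁²=e₂, e₁f₃=e₂f₂=f₁, f₂f₃=e₂; (41) e₁²=e₂, e₁f₃=e₂f₂=f₁, f₂f₃=e₁; (42) e₁²=e₂, e₁f₂=f₃, e₂f₂=f₁; (43^γ) e₁²=e₂, e₁f₂=f₃, e₁f₃=γf₁, e₂f₂=f₁, for γ ∈ ℂ∖{0}; (44^φ) e₁²=e₂, e₁f₂=f₃, e₁f₃=φf₁, e₂f₂=f₁, f₂f₃=e₂, for φ ∈ ℂ. Moreover, these superalgebras are pairwise non-isomorphic, except that within the families: (31^{λ₁}) ≅ (31^{λ₂}) iff λ₁ = λ₂, (43^{γ₁}) ≅ (43^{γ₂}) iff γ₁ = γ₂, and (44^{φ₁}) ≅ (44^{φ₂}) iff φ₁ = φ₂. -/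

import Mathlib

noncomputable section

/-- The underlying ℤ/2-graded vector space of type `(m,n)`: even part `Fin m → ℂ`,
odd part `Fin n → ℂ`. -/
abbrev GV (m n : ℕ) : Type := (Fin m → ℂ) × (Fin n → ℂ)

/-- A superalgebra structure tensor of type `(m,n)`: structure constants
`c i j k` (even·even), `ρ i j k` (even·odd) and `Γ i j k` (odd·odd). -/
abbrev Tensor (m n : ℕ) : Type :=
  (Fin m → Fin m → Fin m → ℂ) × (Fin m → Fin n → Fin n → ℂ) × (Fin n → Fin n → Fin m → ℂ)

/-- The ℤ/2-graded multiplication on `GV m n` determined by a structure tensor. -/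
def mulOf {m n : ℕ} (μ : Tensor m n) (x y : GV m n) : GV m n :=
  (fun k => (∑ i, ∑ j, x.1 i * y.1 j * μ.1 i j k) + ∑ i, ∑ j, x.2 i * y.2 j * μ.2.2 i j k,
   fun k => (∑ i, ∑ j, x.1 i * y.2 j * μ.2.1 i j k) + ∑ i, ∑ j, y.1 i * x.2 j * μ.2.1 i j k)

/-- `x` is homogeneous of parity `p` (`p = 0`: even, `p = 1`: odd). -/
def IsHom {m n : ℕ} (p : ℕ) (x : GV m n) : Prop :=
  (p = 0 ∧ x.2 = 0) ∨ (p = 1 ∧ x.1 = 0)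

/-- The sign `(-1)^k`. -/
def sgn (k : ℕ) : ℂ := (-1 : ℂ) ^ k

/-- The super-Jordan expression `J^s(w; x, y, z)` for homogeneous elements of
parities `pw, px, py, pz`. -/
def superJ {m n : ℕ} (μ : Tensor m n) (pw px py pz : ℕ) (w x y z : GV m n) : GV m n :=
  mulOf μ (mulOf μ w x) (mulOf μ y z)
    + sgn (px * py) • mulOf μ (mulOf μ w y) (mulOf μ x z)
    + sgn ((px + py) * pz) • mulOf μ (mulOf μ w z) (mulOf μ x y)
    - sgn (pw * px) • mulOf μ x (mulOf μ w (mulOf μ y z))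
    - sgn (py * (pw + px)) • mulOf μ y (mulOf μ w (mulOf μ x z))
    - sgn (pz * (pw + px + py)) • mulOf μ z (mulOf μ w (mulOf μ x y))

/-- `μ` is a Jordan superalgebra structure: supercommutativity and the Jordan
superidentity hold for all homogeneous elements. -/
def IsJordanSuper {m n : ℕ} (μ : Tensor m n) : Prop :=
  (∀ (px py : ℕ) (x y : GV m n), IsHom px x → IsHom py y →
      mulOf μ x y = sgn (px * py) • mulOf μ y x) ∧
  (∀ (pw px py pz : ℕ) (w x y z : GV m n),
      IsHom pw w → IsHom px x → IsHom py y → IsHom pz z →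
      superJ μ pw px py pz w x y z = 0)

/-- The product of two graded subspaces: the span of all products. -/
def mulSub {m n : ℕ} (μ : Tensor m n) (A B : Submodule ℂ (GV m n)) : Submodule ℂ (GV m n) :=
  Submodule.span ℂ {z | ∃ a ∈ A, ∃ b ∈ B, z = mulOf μ a b}

/-- The powers `J^k`: `J^1 = J` and `J^{k+1} = Σ_{i=1}^{k} J^i · J^{k+1-i}`. -/
def powT {m n : ℕ} (μ : Tensor m n) : ℕ → Submodule ℂ (GV m n)
  | 0 => ⊤
  | 1 => ⊤
  | (k + 2) => ⨆ i : Fin (k + 1), mulSub μ (powT μ ((i : ℕ) + 1)) (powT μ (k + 1 - (i : ℕ)))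
  decreasing_by
  · have := i.isLt; omega
  · omega

/-- `μ` is nilpotent: some power vanishes. -/
def IsNilpotentT {m n : ℕ} (μ : Tensor m n) : Prop :=
  ∃ k : ℕ, 1 ≤ k ∧ powT μ k = ⊥

/-- A grading-preserving algebra isomorphism between the superalgebras determined
by `μ` and `μ'`. -/
def Iso {m n : ℕ} (μ μ' : Tensor m n) : Prop :=
  ∃ (T : (Fin m → ℂ) ≃ₗ[ℂ] (Fin m → ℂ)) (S : (Fin n → ℂ) ≃ₗ[ℂ] (Fin n → ℂ)),
    ∀ x y : GV m n,
      (T ((mulOf μ x y).1), S ((mulOf μ x y).2)) = mulOf μ' (T x.1, S x.2) (T y.1, S y.2)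

/-- `μ` degenerates to `μ'`: `μ'` lies in the closure of the orbit of `μ` under
base change (in the standard topology). -/
def degenerates {m n : ℕ} (μ μ' : Tensor m n) : Prop :=
  μ' ∈ closure {ν : Tensor m n | Iso μ ν}

/-- Standard even basis vector `e_i`. -/
def eps {m n : ℕ} (i : Fin m) : GV m n := (Pi.single i 1, 0)

/-- Standard odd basis vector `f_j`. -/
def ph {m n : ℕ} (j : Fin n) : GV m n := (0, Pi.single j 1)


/-- A tensor of type (2,3) with products `e₁² = a·e₂`, `e₁f_j = Σ_k R1 j k f_k`,
`e₂f_j = Σ_k R2 j k f_k` and `f_if_j = W i j · e₁ + Θ i j · e₂`. -/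
def T23 (a : ℂ) (R1 R2 W Θ : Fin 3 → Fin 3 → ℂ) : Tensor 2 3 :=
  (fun i j k => if i = 0 ∧ j = 0 ∧ k = 1 then a else 0,
   fun i => if i = 0 then R1 else R2,
   fun i j k => if k = 0 then W i j else Θ i j)

/-- `e·f₂ = f₁`. -/
def P21 : Fin 3 → Fin 3 → ℂ := ![![0,0,0], ![1,0,0], ![0,0,0]]
/-- `e·f₃ = f₂`. -/
def P32 : Fin 3 → Fin 3 → ℂ := ![![0,0,0], ![0,0,0], ![0,1,0]]
/-- `e·f₃ = f₁`. -/
def P31 : Fin 3 → Fin 3 → ℂ := ![![0,0,0], ![0,0,0], ![1,0,0]]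
/-- `e·f₂ = f₃`. -/
def P23 : Fin 3 → Fin 3 → ℂ := ![![0,0,0], ![0,0,1], ![0,0,0]]
/-- `f₁f₂ = e`. -/
def W12 : Fin 3 → Fin 3 → ℂ := ![![0,1,0], ![-1,0,0], ![0,0,0]]
/-- `f₁f₃ = e`. -/
def W13 : Fin 3 → Fin 3 → ℂ := ![![0,0,1], ![0,0,0], ![-1,0,0]]
/-- `f₂f₃ = e`. -/
def W23 : Fin 3 → Fin 3 → ℂ := ![![0,0,0], ![0,0,1], ![0,-1,0]]

/-- The family `(2,3)₃₁^λ`: `e₁² = e₂`, `e₁f₂ = f₁`, `f₁f₃ = λe₂`, `f₂f₃ = e₁`. -/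
def A31 (l : ℂ) : Tensor 2 3 := T23 1 P21 0 W23 (l • W13)

/-- The family `(2,3)₄₃^γ`: `e₁² = e₂`, `e₁f₂ = f₃`, `e₁f₃ = γf₁`, `e₂f₂ = f₁`. -/
def A43 (g : ℂ) : Tensor 2 3 := T23 1 (P23 + g • P31) P21 0 0

/-- The family `(2,3)₄₄^φ`: `e₁² = e₂`, `e₁f₂ = f₃`, `e₁f₃ = φf₁`, `e₂f₂ = f₁`,
`f₂f₃ = e₂`. -/
def A44 (p : ℂ) : Tensor 2 3 := T23 1 (P23 + p • P31) P21 0 W23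

/-- The single (non-parametrized) nilpotent Jordan superalgebras of type (2,3)
from Table 5: entries 0–29 are `(2,3)₁`–`(2,3)₃₀` and entries 30–40 are
`(2,3)₃₂`–`(2,3)₄₂`. -/
def A23 : Fin 41 → Tensor 2 3 :=
  ![ T23 0 0 0 0 0,                -- (2,3)₁
     T23 0 0 0 W12 0,              -- (2,3)₂
     T23 0 0 0 W12 W13,            -- (2,3)₃
     T23 0 P21 0 0 0,              -- (2,3)₄
     T23 0 P21 0 0 W12,            -- (2,3)₅
     T23 0 P21 0 0 W23,            -- (2,3)₆
     T23 0 P21 0 0 W13,            -- (2,3)₇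
     T23 0 P21 0 W23 0,            -- (2,3)₈
     T23 0 P21 0 W23 W12,          -- (2,3)₉
     T23 0 P21 0 W23 W13,          -- (2,3)₁₀
     T23 0 P21 P31 0 0,            -- (2,3)₁₁
     T23 0 P21 P31 0 W23,          -- (2,3)₁₂
     T23 0 P21 P23 0 0,            -- (2,3)₁₃
     T23 0 P21 P23 0 W12,          -- (2,3)₁₄
     T23 0 P21 P32 0 0,            -- (2,3)₁₅
     T23 0 (P21 + P32) 0 0 0,      -- (2,3)₁₆
     T23 0 (P21 + P32) 0 0 W23,    -- (2,3)₁₇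
     T23 0 (P21 + P32) 0 0 W13,    -- (2,3)₁₈
     T23 0 (P21 + P32) P31 0 0,    -- (2,3)₁₉
     T23 0 (P21 + P32) P31 0 W23,  -- (2,3)₂₀
     T23 1 0 0 0 0,                -- (2,3)₂₁
     T23 1 0 0 W12 0,              -- (2,3)₂₂
     T23 1 0 0 0 W12,              -- (2,3)₂₃
     T23 1 0 0 W12 W13,            -- (2,3)₂₄
     T23 1 P21 0 0 0,              -- (2,3)₂₅
     T23 1 P21 0 0 W23,            -- (2,3)₂₆
     T23 1 P21 0 0 W12,            -- (2,3)₂₇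
     T23 1 P21 0 0 W13,            -- (2,3)₂₈
     T23 1 P21 0 W23 0,            -- (2,3)₂₉
     T23 1 P21 0 W23 W12,          -- (2,3)₃₀
     T23 1 (P21 + P32) 0 0 0,      -- (2,3)₃₂
     T23 1 (P21 + P32) 0 0 W13,    -- (2,3)₃₃
     T23 1 (P21 + P32) 0 0 W23,    -- (2,3)₃₄
     T23 1 0 P21 0 0,              -- (2,3)₃₅
     T23 1 0 P21 0 W23,            -- (2,3)₃₆
     T23 1 0 P21 W23 0,            -- (2,3)₃₇
     T23 1 P21 P21 W23 0,          -- (2,3)₃₈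
     T23 1 P31 P21 0 0,            -- (2,3)₃₉
     T23 1 P31 P21 0 W23,          -- (2,3)₄₀
     T23 1 P31 P21 W23 0,          -- (2,3)₄₁
     T23 1 P23 P21 0 0 ]           -- (2,3)₄₂

/-! ### Infrastructure -/

/-- The multiplication as a bilinear map. -/
def mulL {m n : ℕ} (μ : Tensor m n) : GV m n →ₗ[ℂ] GV m n →ₗ[ℂ] GV m n :=
  LinearMap.mk₂ ℂ (mulOf μ)
    (by
      intro x x' y
      ext k <;> simp [mulOf, add_mul, mul_add, Finset.sum_add_distrib] <;> ring)
    (by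
      intro c x y
      ext k <;> simp [mulOf, Finset.mul_sum, mul_add] <;> congr 1 <;>
        refine Finset.sum_congr rfl fun i _ => Finset.sum_congr rfl fun j _ => by ring)
    (by
      intro x x' y
      ext k <;> simp [mulOf, add_mul, mul_add, Finset.sum_add_distrib] <;> ring)
    (by
      intro c x y
      ext k <;> simp [mulOf, Finset.mul_sum, mul_add] <;> congr 1 <;>
        refine Finset.sum_congr rfl fun i _ => Finset.sum_congr rfl fun j _ => by ring)

theorem mulL_apply {m n : ℕ} (μ : Tensor m n) (x y : GV m n) : mulL μ x y = mulOf μ x y := rfl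

/-- even-even product -/
def mE {m n : ℕ} (μ : Tensor m n) : (Fin m → ℂ) →ₗ[ℂ] (Fin m → ℂ) →ₗ[ℂ] (Fin m → ℂ) :=
  ((mulL μ).compl₁₂ (LinearMap.inl ℂ _ _) (LinearMap.inl ℂ _ _)).compr₂ (LinearMap.fst ℂ _ _)
/-- even-odd product -/
def mR {m n : ℕ} (μ : Tensor m n) : (Fin m → ℂ) →ₗ[ℂ] (Fin n → ℂ) →ₗ[ℂ] (Fin n → ℂ) :=
  ((mulL μ).compl₁₂ (LinearMap.inl ℂ _ _) (LinearMap.inr ℂ _ _)).compr₂ (LinearMap.snd ℂ _ _)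
/-- odd-odd product -/
def mG {m n : ℕ} (μ : Tensor m n) : (Fin n → ℂ) →ₗ[ℂ] (Fin n → ℂ) →ₗ[ℂ] (Fin m → ℂ) :=
  ((mulL μ).compl₁₂ (LinearMap.inr ℂ _ _) (LinearMap.inr ℂ _ _)).compr₂ (LinearMap.fst ℂ _ _)

theorem mE_apply {m n : ℕ} (μ : Tensor m n) (x y : Fin m → ℂ) (k : Fin m) :
    mE μ x y k = ∑ i, ∑ j, x i * y j * μ.1 i j k := by
  simp [mE, mulL_apply, mulOf]

theorem mR_apply {m n : ℕ} (μ : Tensor m n) (x : Fin m → ℂ) (y : Fin n → ℂ) (k : Fin n) :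
    mR μ x y k = ∑ i, ∑ j, x i * y j * μ.2.1 i j k := by
  simp [mR, mulL_apply, mulOf]

theorem mG_apply {m n : ℕ} (μ : Tensor m n) (x y : Fin n → ℂ) (k : Fin m) :
    mG μ x y k = ∑ i, ∑ j, x i * y j * μ.2.2 i j k := by
  simp [mG, mulL_apply, mulOf]

theorem mulOf_eq {m n : ℕ} (μ : Tensor m n) (x y : GV m n) :
    mulOf μ x y = (mE μ x.1 y.1 + mG μ x.2 y.2, mR μ x.1 y.2 + mR μ y.1 x.2) := by
  ext k <;> simp [mulOf, mE_apply, mR_apply, mG_apply]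

theorem mulSub_eq {m n : ℕ} (μ : Tensor m n) (A B : Submodule ℂ (GV m n)) :
    mulSub μ A B = Submodule.map₂ (mulL μ) A B := by
  rw [Submodule.map₂_eq_span_image2, mulSub]
  congr 1
  ext z
  simp only [Set.mem_ofPred_eq, Set.mem_image2, SetLike.mem_coe, mulL_apply]
  constructor
  · rintro ⟨a, ha, b, hb, rfl⟩; exact ⟨a, ha, b, hb, rfl⟩
  · rintro ⟨a, ha, b, hb, rfl⟩; exact ⟨a, ha, b, hb, rfl⟩

/-- Nilpotency in the form in which it is used. -/
def NilX {m n : ℕ} (μ : Tensor m n) : Prop :=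
  ∀ X : Submodule ℂ (GV m n), X ≤ Submodule.map₂ (mulL μ) ⊤ X → X = ⊥

theorem nilX_of_nilpotent {m n : ℕ} {μ : Tensor m n} (h : IsNilpotentT μ) : NilX μ := by
  intro X hX
  obtain ⟨k, hk, hk0⟩ := h
  have key : ∀ k, X ≤ powT μ (k + 1) := by
    intro k
    induction k with
    | zero => rw [zero_add, powT]; exact le_top
    | succ k ih =>
      rw [powT]
      refine le_trans ?_ (le_iSup _ (0 : Fin (k + 1)))
      rw [mulSub_eq]
      refine hX.trans (Submodule.map₂_le_map₂ ?_ ?_)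
      · simp [powT]
      · simpa using ih
  obtain ⟨j, rfl⟩ : ∃ j, k = j + 1 := ⟨k - 1, by omega⟩
  exact le_bot_iff.1 (hk0 ▸ key j)

/-- The linear equivalence on the whole space attached to a pair. -/
theorem iso_iff {m n : ℕ} {μ ν : Tensor m n} : Iso μ ν ↔
    ∃ (T : (Fin m → ℂ) ≃ₗ[ℂ] (Fin m → ℂ)) (S : (Fin n → ℂ) ≃ₗ[ℂ] (Fin n → ℂ)),
      (∀ x y, T (mE μ x y) = mE ν (T x) (T y)) ∧ (∀ x y, S (mR μ x y) = mR ν (T x) (S y)) ∧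
      (∀ x y, T (mG μ x y) = mG ν (S x) (S y)) := by
  constructor
  · rintro ⟨T, S, h⟩
    refine ⟨T, S, fun x y => ?_, fun x y => ?_, fun x y => ?_⟩
    · simpa [mulOf_eq] using congrArg Prod.fst (h (x, 0) (y, 0))
    · simpa [mulOf_eq] using congrArg Prod.snd (h (x, 0) (0, y))
    · simpa [mulOf_eq] using congrArg Prod.fst (h (0, x) (0, y))
  · rintro ⟨T, S, h1, h2, h3⟩
    refine ⟨T, S, fun x y => ?_⟩
    simp [mulOf_eq, h1, h2, h3]

theorem Iso.symm' {m n : ℕ} {μ ν : Tensor m n} (h : Iso μ ν) : Iso ν μ := by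
  rw [iso_iff] at *
  obtain ⟨T, S, h1, h2, h3⟩ := h
  refine ⟨T.symm, S.symm, fun x y => ?_, fun x y => ?_, fun x y => ?_⟩
  · rw [LinearEquiv.symm_apply_eq]; simp [h1]
  · rw [LinearEquiv.symm_apply_eq]; simp [h2]
  · rw [LinearEquiv.symm_apply_eq]; simp [h3]

theorem Iso.trans' {m n : ℕ} {μ ν ξ : Tensor m n} (h : Iso μ ν) (h' : Iso ν ξ) : Iso μ ξ := by
  obtain ⟨T, S, h⟩ := h
  obtain ⟨T', S', h'⟩ := h'
  refine ⟨T.trans T', S.trans S', fun x y => ?_⟩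
  have a := h x y
  have b := h' (T x.1, S x.2) (T y.1, S y.2)
  rw [← a] at b
  simpa using b

theorem Iso.refl' {m n : ℕ} (μ : Tensor m n) : Iso μ μ :=
  ⟨LinearEquiv.refl _ _, LinearEquiv.refl _ _, fun _ _ => rfl⟩

theorem iso_total {m n : ℕ} {μ ν : Tensor m n} (h : Iso μ ν) :
    ∃ φ : GV m n ≃ₗ[ℂ] GV m n, (∀ x y, φ (mulOf μ x y) = mulOf ν (φ x) (φ y)) ∧
      (∀ p x, IsHom p x → IsHom p (φ x)) ∧ (∀ p x, IsHom p x → IsHom p (φ.symm x)) := by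
  obtain ⟨T, S, h⟩ := h
  refine ⟨T.prodCongr S, fun x y => ?_, fun p x hx => ?_, fun p x hx => ?_⟩
  · exact h x y
  · rcases hx with ⟨h1, h2⟩ | ⟨h1, h2⟩
    · left; exact ⟨h1, by simp [h2]⟩
    · right; exact ⟨h1, by simp [h2]⟩
  · rcases hx with ⟨h1, h2⟩ | ⟨h1, h2⟩
    · left; exact ⟨h1, by simp [h2]⟩
    · right; exact ⟨h1, by simp [h2]⟩

theorem jordan_iso {m n : ℕ} {μ ν : Tensor m n} (h : Iso μ ν) (hJ : IsJordanSuper μ) :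
    IsJordanSuper ν := by
  obtain ⟨φ, h, h1, h2⟩ := iso_total h
  have e : ∀ x y, mulOf ν x y = φ (mulOf μ (φ.symm x) (φ.symm y)) := by
    intro x y; simp [h]
  refine ⟨fun px py x y hx hy => ?_, fun pw px py pz w x y z hw hx hy hz => ?_⟩
  · rw [e, e, hJ.1 px py _ _ (h2 _ _ hx) (h2 _ _ hy), map_smul]
  · have := hJ.2 pw px py pz _ _ _ _ (h2 _ _ hw) (h2 _ _ hx) (h2 _ _ hy) (h2 _ _ hz)
    have := congrArg φ this
    simpa [superJ, h] using this

theorem nilX_iso {m n : ℕ} {μ ν : Tensor m n} (h : Iso μ ν) (hN : NilX μ) : NilX ν := by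
  obtain ⟨φ, h, -, -⟩ := iso_total h
  intro X hX
  have key : X.comap (φ : GV m n →ₗ[ℂ] GV m n) = ⊥ := by
    apply hN
    intro x hx
    have hx' : φ x ∈ X := hx
    have := hX hx'
    have le : Submodule.map₂ (mulL ν) ⊤ X ≤
        (Submodule.map₂ (mulL μ) ⊤ (X.comap (φ : GV m n →ₗ[ℂ] GV m n))).comap
          (φ.symm : GV m n →ₗ[ℂ] GV m n) := by
      rw [Submodule.map₂_le]
      intro a _ b hb
      have : φ.symm (mulL ν a b) = mulL μ (φ.symm a) (φ.symm b) := by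
        rw [LinearEquiv.symm_apply_eq, mulL_apply, mulL_apply, h]; simp
      simp only [Submodule.mem_comap, LinearEquiv.coe_coe, this]
      exact Submodule.apply_mem_map₂ _ trivial (by simpa using hb)
    simpa using le this
  rw [eq_bot_iff]
  intro x hx
  have : φ.symm x ∈ X.comap (φ : GV m n →ₗ[ℂ] GV m n) := by simpa using hx
  rw [key] at this
  simpa using this

theorem nil2 {m n : ℕ} {μ : Tensor m n} (hN : NilX μ) {a b x : GV m n} {c : ℂ}
    (h : mulOf μ b (mulOf μ a x) = c • x) (hc : c ≠ 0) : x = 0 := by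
  have := hN (Submodule.span ℂ {x, mulOf μ a x}) (by
    rw [Submodule.span_le]
    rintro z (rfl | rfl)
    · have : z = c⁻¹ • mulL μ b (mulOf μ a z) := by
        rw [mulL_apply, h, smul_smul, inv_mul_cancel₀ hc, one_smul]
      rw [this]
      refine Submodule.smul_mem _ _ (Submodule.apply_mem_map₂ _ trivial ?_)
      rw [← this]
      exact Submodule.subset_span (by simp)
    · exact Submodule.apply_mem_map₂ (mulL μ) trivial (Submodule.subset_span (by simp)))
  rw [Submodule.span_eq_bot] at this
  exact this x (by simp)

/-- Jordan and nilpotent. -/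
def JN {m n : ℕ} (μ : Tensor m n) : Prop := IsJordanSuper μ ∧ NilX μ

theorem jn_iso {m n : ℕ} {μ ν : Tensor m n} (h : Iso μ ν) (hJ : JN μ) : JN ν :=
  ⟨jordan_iso h hJ.1, nilX_iso h hJ.2⟩

theorem isoOfBasis {m n : ℕ} {μ : Tensor m n} (ν : Tensor m n) (E : Fin m → (Fin m → ℂ))
    (hE : LinearIndependent ℂ E) (F : Fin n → (Fin n → ℂ)) (hF : LinearIndependent ℂ F)
    (h1 : ∀ i j, mE μ (E i) (E j) = ∑ k, ν.1 i j k • E k)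
    (h2 : ∀ i j, mR μ (E i) (F j) = ∑ k, ν.2.1 i j k • F k)
    (h3 : ∀ i j, mG μ (F i) (F j) = ∑ k, ν.2.2 i j k • E k) : Iso μ ν := by
  apply Iso.symm'
  rw [iso_iff]
  let bE := basisOfLinearIndependentOfCardEqFinrank' E hE (by simp)
  let bF := basisOfLinearIndependentOfCardEqFinrank' F hF (by simp)
  have eE : ∀ x, bE.equivFun.symm x = ∑ i, x i • E i := by
    intro x; simp [Module.Basis.equivFun_symm_apply, bE]
  have eF : ∀ x, bF.equivFun.symm x = ∑ i, x i • F i := by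
    intro x; simp [Module.Basis.equivFun_symm_apply, bF]
  refine ⟨bE.equivFun.symm, bF.equivFun.symm, fun x y => ?_, fun x y => ?_, fun x y => ?_⟩
  · simp only [eE, map_sum, map_smul, LinearMap.sum_apply, LinearMap.smul_apply, h1,
      Finset.smul_sum, mE_apply, Finset.sum_smul, smul_smul]
    rw [Finset.sum_comm]
    refine (Finset.sum_congr rfl fun i _ => Finset.sum_comm).trans ?_
    rw [Finset.sum_comm]
    refine (Finset.sum_congr rfl fun i _ => Finset.sum_congr rfl fun j _ =>
      Finset.sum_congr rfl fun k _ => ?_)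
    congr 1; ring
  · simp only [eE, eF, map_sum, map_smul, LinearMap.sum_apply, LinearMap.smul_apply, h2,
      Finset.smul_sum, mR_apply, Finset.sum_smul, smul_smul]
    rw [Finset.sum_comm]
    refine (Finset.sum_congr rfl fun i _ => Finset.sum_comm).trans ?_
    rw [Finset.sum_comm]
    refine (Finset.sum_congr rfl fun i _ => Finset.sum_congr rfl fun j _ =>
      Finset.sum_congr rfl fun k _ => ?_)
    congr 1; ring
  · simp only [eE, eF, map_sum, map_smul, LinearMap.sum_apply, LinearMap.smul_apply, h3,
      Finset.smul_sum, mG_apply, Finset.sum_smul, smul_smul]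
    rw [Finset.sum_comm]
    refine (Finset.sum_congr rfl fun i _ => Finset.sum_comm).trans ?_
    rw [Finset.sum_comm]
    refine (Finset.sum_congr rfl fun i _ => Finset.sum_congr rfl fun j _ =>
      Finset.sum_congr rfl fun k _ => ?_)
    congr 1; ring

/-! ### Adapted bases -/

theorem nilE {m n : ℕ} {μ : Tensor m n} (hN : NilX μ) (A : Submodule ℂ (Fin m → ℂ))
    (hA : A ≤ Submodule.map₂ (mE μ) ⊤ A) : A = ⊥ := by
  have := hN (A.map (LinearMap.inl ℂ _ _)) (by
    rw [Submodule.map_le_iff_le_comap]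
    refine hA.trans ?_
    rw [Submodule.map₂_le]
    intro u _ a ha
    have : (LinearMap.inl ℂ (Fin m → ℂ) (Fin n → ℂ)) (mE μ u a) = mulL μ (u, 0) (a, 0) := by
      simp [mulL_apply, mulOf_eq]
    rw [Submodule.mem_comap, this]
    exact Submodule.apply_mem_map₂ _ trivial ⟨a, ha, rfl⟩)
  rw [eq_bot_iff]
  intro x hx
  have h : LinearMap.inl ℂ (Fin m → ℂ) (Fin n → ℂ) x ∈ A.map (LinearMap.inl ℂ _ _) := ⟨x, hx, rfl⟩
  rw [this] at h
  simpa using h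

theorem nilR {m n : ℕ} {μ : Tensor m n} (hN : NilX μ) (A : Submodule ℂ (Fin n → ℂ))
    (hA : A ≤ Submodule.map₂ (mR μ) ⊤ A) : A = ⊥ := by
  have := hN (A.map (LinearMap.inr ℂ _ _)) (by
    rw [Submodule.map_le_iff_le_comap]
    refine hA.trans ?_
    rw [Submodule.map₂_le]
    intro u _ a ha
    have : (LinearMap.inr ℂ (Fin m → ℂ) (Fin n → ℂ)) (mR μ u a) = mulL μ (u, 0) (0, a) := by
      simp [mulL_apply, mulOf_eq]
    rw [Submodule.mem_comap, this]
    exact Submodule.apply_mem_map₂ _ trivial ⟨a, ha, rfl⟩)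
  rw [eq_bot_iff]
  intro x hx
  have h : LinearMap.inr ℂ (Fin m → ℂ) (Fin n → ℂ) x ∈ A.map (LinearMap.inr ℂ _ _) := ⟨x, hx, rfl⟩
  rw [this] at h
  simpa using h

theorem exists_functional {U W : Type*} [AddCommGroup U] [Module ℂ U] [AddCommGroup W] [Module ℂ W]
    (f : U →ₗ[ℂ] W →ₗ[ℂ] W)
    (hf : ∀ A : Submodule ℂ W, A ≤ Submodule.map₂ f ⊤ A → A = ⊥) (B : Submodule ℂ W) (hB : B ≠ ⊥) :
    ∃ ξ : W →ₗ[ℂ] ℂ, ∃ b ∈ B, ξ b = 1 ∧ ∀ u, ∀ c ∈ B, ξ (f u c) = 0 := by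
  have : ¬ B ≤ Submodule.map₂ f ⊤ B := fun h => hB (hf B h)
  rw [SetLike.not_le_iff_exists] at this
  obtain ⟨b, hb, hb'⟩ := this
  obtain ⟨ξ, h1, h2⟩ := Submodule.exists_le_ker_of_notMem hb'
  refine ⟨ξ, (ξ b)⁻¹ • b, B.smul_mem _ hb, ?_, fun u c hc => ?_⟩
  · simp [h1]
  · exact h2 (Submodule.apply_mem_map₂ _ trivial hc)

theorem flag2 {U W : Type*} [AddCommGroup U] [Module ℂ U] [AddCommGroup W] [Module ℂ W]
    [FiniteDimensional ℂ W] (hd : Module.finrank ℂ W = 2)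
    (f : U →ₗ[ℂ] W →ₗ[ℂ] W)
    (hf : ∀ A : Submodule ℂ W, A ≤ Submodule.map₂ f ⊤ A → A = ⊥) :
    ∃ e1 e2 : W, LinearIndependent ℂ ![e1, e2] ∧ (∀ u, f u e2 = 0) ∧
      (∀ u, ∃ c : ℂ, f u e1 = c • e2) := by
  have : Nontrivial W := Module.nontrivial_of_finrank_pos (R := ℂ) (by omega)
  obtain ⟨ξ, e1, -, h1, h1'⟩ := exists_functional f hf ⊤ top_ne_bot
  have hk : LinearMap.ker ξ ≠ ⊥ := LinearMap.ker_ne_bot_of_finrank_lt (by simp [hd])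
  obtain ⟨η, e2, h2k, h2, h2'⟩ := exists_functional f hf _ hk
  have h2k : ξ e2 = 0 := h2k
  have li : LinearIndependent ℂ ![e1, e2] := by
    rw [Fintype.linearIndependent_iff]
    intro g hg
    rw [Fin.sum_univ_two] at hg
    have a := congrArg ξ hg
    have b := congrArg η hg
    simp [h1, h2k] at a
    simp [a, h2] at b
    intro i; fin_cases i <;> assumption
  have sp : ∀ w : W, ∃ c d : ℂ, w = c • e1 + d • e2 := by
    intro w
    let bb := basisOfLinearIndependentOfCardEqFinrank' _ li (by simp [hd])
    refine ⟨bb.repr w 0, bb.repr w 1, ?_⟩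
    have := bb.sum_repr w
    rw [Fin.sum_univ_two] at this
    simpa [bb] using this.symm
  refine ⟨e1, e2, li, fun u => ?_, fun u => ?_⟩
  · obtain ⟨c, d, h⟩ := sp (f u e2)
    have a := h1' u e2 trivial
    have b := h2' u e2 h2k
    rw [h] at a b
    simp [h1, h2k] at a
    simp [a, h2] at b
    simp [h, a, b]
  · obtain ⟨c, d, h⟩ := sp (f u e1)
    have a := h1' u e1 trivial
    rw [h] at a
    simp [h1, h2k] at a
    exact ⟨d, by simp [h, a]⟩

theorem flag3 {U W : Type*} [AddCommGroup U] [Module ℂ U] [AddCommGroup W] [Module ℂ W]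
    [FiniteDimensional ℂ W] (hd : Module.finrank ℂ W = 3)
    (f : U →ₗ[ℂ] W →ₗ[ℂ] W)
    (hf : ∀ A : Submodule ℂ W, A ≤ Submodule.map₂ f ⊤ A → A = ⊥) :
    ∃ e1 e2 e3 : W, LinearIndependent ℂ ![e1, e2, e3] ∧ (∀ u, f u e1 = 0) ∧
      (∀ u, ∃ c : ℂ, f u e2 = c • e1) ∧ (∀ u, ∃ c d : ℂ, f u e3 = c • e1 + d • e2) := by
  have : Nontrivial W := Module.nontrivial_of_finrank_pos (R := ℂ) (by omega)
  obtain ⟨ξ, e3, -, h3, h3'⟩ := exists_functional f hf ⊤ top_ne_bot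
  have hk : LinearMap.ker ξ ≠ ⊥ := LinearMap.ker_ne_bot_of_finrank_lt (by simp [hd])
  obtain ⟨η, e2, h2k, h2, h2'⟩ := exists_functional f hf _ hk
  have h2k : ξ e2 = 0 := h2k
  have hk : LinearMap.ker (ξ.prod η) ≠ ⊥ := LinearMap.ker_ne_bot_of_finrank_lt (by simp [hd])
  obtain ⟨ζ, e1, h1k, h1, h1'⟩ := exists_functional f hf _ hk
  have h1k : ξ e1 = 0 ∧ η e1 = 0 := by simpa using h1k
  obtain ⟨h1a, h1b⟩ := h1k
  have li : LinearIndependent ℂ ![e1, e2, e3] := by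
    rw [Fintype.linearIndependent_iff]
    intro g hg
    rw [Fin.sum_univ_three] at hg
    have a := congrArg ξ hg
    have b := congrArg η hg
    have c := congrArg ζ hg
    simp [h1a, h2k, h3] at a
    simp [a, h2, h1b] at b
    simp [a, b, h1] at c
    intro i; fin_cases i <;> assumption
  have sp : ∀ w : W, ∃ c d e : ℂ, w = c • e1 + d • e2 + e • e3 := by
    intro w
    let bb := basisOfLinearIndependentOfCardEqFinrank' _ li (by simp [hd])
    refine ⟨bb.repr w 0, bb.repr w 1, bb.repr w 2, ?_⟩
    have := bb.sum_repr w
    rw [Fin.sum_univ_three] at this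
    simpa [bb] using this.symm
  refine ⟨e1, e2, e3, li, fun u => ?_, fun u => ?_, fun u => ?_⟩
  · obtain ⟨c, d, e, h⟩ := sp (f u e1)
    have a := h3' u e1 trivial
    have b := h2' u e1 h1a
    have b' := h1' u e1 (by simp [h1a, h1b])
    rw [h] at a b b'
    simp [h1a, h2k, h3] at a
    simp [a, h2, h1b] at b
    simp [a, b, h1] at b'
    simp [h, a, b, b']
  · obtain ⟨c, d, e, h⟩ := sp (f u e2)
    have a := h3' u e2 trivial
    have b := h2' u e2 h2k
    rw [h] at a b
    simp [h1a, h2k, h3] at a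
    simp [a, h2, h1b] at b
    exact ⟨c, by simp [h, a, b]⟩
  · obtain ⟨c, d, e, h⟩ := sp (f u e3)
    have a := h3' u e3 trivial
    rw [h] at a
    simp [h1a, h2k, h3] at a
    exact ⟨c, d, by simp [h, a]⟩

/-- strictly triangular matrices: `f₂ ↦ p f₁`, `f₃ ↦ q f₂ + r f₁`. -/
def Lo (p q r : ℂ) : Fin 3 → Fin 3 → ℂ := ![![0,0,0], ![p,0,0], ![r,q,0]]
/-- antisymmetric matrices. -/
def An (x y z : ℂ) : Fin 3 → Fin 3 → ℂ := ![![0,x,y], ![-x,0,z], ![-y,-z,0]]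

theorem mG_anti {m n : ℕ} {μ : Tensor m n} (hJ : IsJordanSuper μ) (x y : Fin n → ℂ) :
    mG μ x y = - mG μ y x := by
  have := congrArg Prod.fst (hJ.1 1 1 (0, x) (0, y) (Or.inr ⟨rfl, rfl⟩) (Or.inr ⟨rfl, rfl⟩))
  simpa [mulOf_eq, sgn] using this

theorem mE_comm {m n : ℕ} {μ : Tensor m n} (hJ : IsJordanSuper μ) (x y : Fin m → ℂ) :
    mE μ x y = mE μ y x := by
  have := congrArg Prod.fst (hJ.1 0 0 (x, 0) (y, 0) (Or.inl ⟨rfl, rfl⟩) (Or.inl ⟨rfl, rfl⟩))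
  simpa [mulOf_eq, sgn] using this

/-- Given bases with prescribed even-even and even-odd products, the tensor is isomorphic to a
tensor in partially normalized form. -/
theorem toStd {μ : Tensor 2 3} (hJ : IsJordanSuper μ) (a : ℂ) (R1 R2 : Fin 3 → Fin 3 → ℂ)
    (e1 e2 : Fin 2 → ℂ) (hE : LinearIndependent ℂ ![e1, e2])
    (f1 f2 f3 : Fin 3 → ℂ) (hF : LinearIndependent ℂ ![f1, f2, f3])
    (h11 : mE μ e1 e1 = a • e2) (h12 : mE μ e1 e2 = 0) (h22 : mE μ e2 e2 = 0)
    (r11 : mR μ e1 f1 = R1 0 0 • f1 + R1 0 1 • f2 + R1 0 2 • f3)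
    (r12 : mR μ e1 f2 = R1 1 0 • f1 + R1 1 1 • f2 + R1 1 2 • f3)
    (r13 : mR μ e1 f3 = R1 2 0 • f1 + R1 2 1 • f2 + R1 2 2 • f3)
    (r21 : mR μ e2 f1 = R2 0 0 • f1 + R2 0 1 • f2 + R2 0 2 • f3)
    (r22 : mR μ e2 f2 = R2 1 0 • f1 + R2 1 1 • f2 + R2 1 2 • f3)
    (r23 : mR μ e2 f3 = R2 2 0 • f1 + R2 2 1 • f2 + R2 2 2 • f3) :
    ∃ w12 w13 w23 t12 t13 t23 : ℂ,
      Iso μ (T23 a R1 R2 (An w12 w13 w23) (An t12 t13 t23)) := by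
  have sp : ∀ w : Fin 2 → ℂ, ∃ c d : ℂ, w = c • e1 + d • e2 := by
    intro w
    let bb := basisOfLinearIndependentOfCardEqFinrank' _ hE (by simp)
    refine ⟨bb.repr w 0, bb.repr w 1, ?_⟩
    have := bb.sum_repr w
    rw [Fin.sum_univ_two] at this
    simpa [bb] using this.symm
  obtain ⟨w12, t12, g12⟩ := sp (mG μ f1 f2)
  obtain ⟨w13, t13, g13⟩ := sp (mG μ f1 f3)
  obtain ⟨w23, t23, g23⟩ := sp (mG μ f2 f3)
  have g0 : ∀ x, mG μ x x = 0 := fun x => self_eq_neg.1 (mG_anti hJ x x)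
  have g21 := mG_anti hJ f2 f1
  have g31 := mG_anti hJ f3 f1
  have g32 := mG_anti hJ f3 f2
  have h21 := mE_comm hJ e2 e1
  rw [g12] at g21
  rw [g13] at g31
  rw [g23] at g32
  rw [h12] at h21
  refine ⟨w12, w13, w23, t12, t13, t23, isoOfBasis _ _ hE _ hF ?_ ?_ ?_⟩
  · intro i j
    fin_cases i <;> fin_cases j <;> simp [T23, h11, h12, h21, h22]
  · intro i j
    fin_cases i <;> fin_cases j <;>
      simp [T23, Fin.sum_univ_three, r11, r12, r13, r21, r22, r23]
  · intro i j
    fin_cases i <;> fin_cases j <;>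
      simp [T23, An, Fin.sum_univ_two, g0, g12, g13, g23, g21, g31, g32] <;> abel

/-- First reduction: triangular form. -/
theorem toG {μ : Tensor 2 3} (h : JN μ) : ∃ a : ℂ, (a = 0 ∨ a = 1) ∧
    ∃ p1 q1 r1 p2 q2 r2 w12 w13 w23 t12 t13 t23 : ℂ,
    Iso μ (T23 a (Lo p1 q1 r1) (Lo p2 q2 r2) (An w12 w13 w23) (An t12 t13 t23)) := by
  obtain ⟨e1, e2, hE, E2, E1⟩ := flag2 (by simp) (mE μ) (nilE h.2)
  obtain ⟨f1, f2, f3, hF, F1, F2, F3⟩ := flag3 (by simp) (mR μ) (nilR h.2)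
  obtain ⟨c, hc⟩ := E1 e1
  obtain ⟨d, e2', hd, hE', E2', hc'⟩ : ∃ a : ℂ, ∃ e2' : Fin 2 → ℂ, (a = 0 ∨ a = 1) ∧
      LinearIndependent ℂ ![e1, e2'] ∧ (∀ u, mE μ u e2' = 0) ∧ mE μ e1 e1 = a • e2' := by
    by_cases h0 : c = 0
    · exact ⟨0, e2, Or.inl rfl, hE, E2, by simp [hc, h0]⟩
    · refine ⟨1, c • e2, Or.inr rfl, ?_, fun u => by simp [E2], by simp [hc]⟩
      rw [LinearIndependent.pair_iff] at hE ⊢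
      intro s t hst
      rw [smul_smul] at hst
      obtain ⟨a, b⟩ := hE _ _ hst
      exact ⟨a, by simpa [h0] using b⟩
  refine ⟨d, hd, ?_⟩
  obtain ⟨p1, hp1⟩ := F2 e1
  obtain ⟨r1, q1, hq1⟩ := F3 e1
  obtain ⟨p2, hp2⟩ := F2 e2'
  obtain ⟨r2, q2, hq2⟩ := F3 e2'
  refine ⟨p1, q1, r1, p2, q2, r2, toStd h.1 _ _ _ e1 e2' hE' f1 f2 f3 hF hc' (E2' _) (E2' _)
    ?_ ?_ ?_ ?_ ?_ ?_⟩ <;> simp [Lo, F1, hp1, hq1, hp2, hq2]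

/-! ### Coordinates -/

theorem mE_T23 (a : ℂ) (R1 R2 W H : Fin 3 → Fin 3 → ℂ) (x y : Fin 2 → ℂ) :
    mE (T23 a R1 R2 W H) x y = ![0, a * x 0 * y 0] := by
  ext k
  rw [mE_apply]
  fin_cases k <;> simp [T23, Fin.sum_univ_two]
  ring

theorem mR_T23 (a : ℂ) (R1 R2 W H : Fin 3 → Fin 3 → ℂ) (x : Fin 2 → ℂ) (y : Fin 3 → ℂ) :
    mR (T23 a R1 R2 W H) x y = fun k => ∑ l, y l * (x 0 * R1 l k + x 1 * R2 l k) := by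
  ext k
  rw [mR_apply]
  simp [T23, Fin.sum_univ_two, Fin.sum_univ_three]
  ring

/-- the value of an antisymmetric form -/
def bil (w12 w13 w23 : ℂ) (x y : Fin 3 → ℂ) : ℂ :=
  w12 * (x 0 * y 1 - x 1 * y 0) + w13 * (x 0 * y 2 - x 2 * y 0) + w23 * (x 1 * y 2 - x 2 * y 1)

theorem mG_T23 (a : ℂ) (R1 R2 : Fin 3 → Fin 3 → ℂ) (w12 w13 w23 t12 t13 t23 : ℂ)
    (x y : Fin 3 → ℂ) :
    mG (T23 a R1 R2 (An w12 w13 w23) (An t12 t13 t23)) x y =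
      ![bil w12 w13 w23 x y, bil t12 t13 t23 x y] := by
  ext k
  rw [mG_apply]
  fin_cases k <;> simp [T23, An, bil, Fin.sum_univ_three] <;> ring

theorem li2 (E : Fin 2 → Fin 2 → ℂ) (h : E 0 0 * E 1 1 - E 0 1 * E 1 0 ≠ 0) :
    LinearIndependent ℂ E := by
  have := (Matrix.linearIndependent_rows_iff_isUnit (A := Matrix.of E)).2 (by
    rw [Matrix.isUnit_iff_isUnit_det, Matrix.det_fin_two, isUnit_iff_ne_zero]
    exact h)
  exact this

theorem li3 (F : Fin 3 → Fin 3 → ℂ) (h : F 0 0 * F 1 1 * F 2 2 - F 0 0 * F 1 2 * F 2 1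
    - F 0 1 * F 1 0 * F 2 2 + F 0 1 * F 1 2 * F 2 0 + F 0 2 * F 1 0 * F 2 1
    - F 0 2 * F 1 1 * F 2 0 ≠ 0) :
    LinearIndependent ℂ F := by
  have := (Matrix.linearIndependent_rows_iff_isUnit (A := Matrix.of F)).2 (by
    rw [Matrix.isUnit_iff_isUnit_det, Matrix.det_fin_three, isUnit_iff_ne_zero]
    exact h)
  exact this

/-- explicit change of basis, Γ unspecified -/
theorem stdC {a : ℂ} {R1 R2 : Fin 3 → Fin 3 → ℂ} {w12 w13 w23 t12 t13 t23 : ℂ}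
    (hJ : JN (T23 a R1 R2 (An w12 w13 w23) (An t12 t13 t23))) (a' : ℂ)
    (R1' R2' : Fin 3 → Fin 3 → ℂ) (E : Fin 2 → Fin 2 → ℂ) (F : Fin 3 → Fin 3 → ℂ)
    (hE : E 0 0 * E 1 1 - E 0 1 * E 1 0 ≠ 0)
    (hF : F 0 0 * F 1 1 * F 2 2 - F 0 0 * F 1 2 * F 2 1
      - F 0 1 * F 1 0 * F 2 2 + F 0 1 * F 1 2 * F 2 0 + F 0 2 * F 1 0 * F 2 1
      - F 0 2 * F 1 1 * F 2 0 ≠ 0)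
    (h1 : a * E 0 0 * E 0 0 = a' * E 1 1 ∧ a' * E 1 0 = 0 ∧ a * E 1 0 = 0)
    (hr1 : ∀ j k, ∑ l, F j l * (E 0 0 * R1 l k + E 0 1 * R2 l k) = ∑ m, R1' j m * F m k)
    (hr2 : ∀ j k, ∑ l, F j l * (E 1 0 * R1 l k + E 1 1 * R2 l k) = ∑ m, R2' j m * F m k) :
    ∃ w12' w13' w23' t12' t13' t23' : ℂ,
      Iso (T23 a R1 R2 (An w12 w13 w23) (An t12 t13 t23))
        (T23 a' R1' R2' (An w12' w13' w23') (An t12' t13' t23')) := by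
  obtain ⟨h1, h1', h1''⟩ := h1
  have h2 : a * E 0 0 * E 1 0 = 0 := by rw [mul_right_comm, h1'', zero_mul]
  have hE' : LinearIndependent ℂ ![E 0, E 1] := by
    convert li2 E hE using 1; ext i; fin_cases i <;> rfl
  have hF' : LinearIndependent ℂ ![F 0, F 1, F 2] := by
    convert li3 F hF using 1; ext i; fin_cases i <;> rfl
  refine toStd hJ.1 a' R1' R2' (E 0) (E 1) hE' (F 0) (F 1) (F 2) hF' ?_ ?_ ?_ ?_ ?_ ?_ ?_ ?_ ?_
  · rw [mE_T23]; ext k; fin_cases k <;> simp [h1, h1']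
  · rw [mE_T23]; ext k; fin_cases k <;> simp only [h2] <;> simp
  · rw [mE_T23]; ext k; fin_cases k <;> simp [h1'']
  all_goals
    rw [mR_T23]; ext k
    simp only [Pi.add_apply, Pi.smul_apply, smul_eq_mul, hr1, hr2, Fin.sum_univ_three]

/-- explicit change of basis -/
theorem isoC {a : ℂ} {R1 R2 : Fin 3 → Fin 3 → ℂ} {w12 w13 w23 t12 t13 t23 : ℂ} (a' : ℂ)
    (R1' R2' : Fin 3 → Fin 3 → ℂ) (w12' w13' w23' t12' t13' t23' : ℂ)
    (E : Fin 2 → Fin 2 → ℂ) (F : Fin 3 → Fin 3 → ℂ)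
    (hE : E 0 0 * E 1 1 - E 0 1 * E 1 0 ≠ 0)
    (hF : F 0 0 * F 1 1 * F 2 2 - F 0 0 * F 1 2 * F 2 1
      - F 0 1 * F 1 0 * F 2 2 + F 0 1 * F 1 2 * F 2 0 + F 0 2 * F 1 0 * F 2 1
      - F 0 2 * F 1 1 * F 2 0 ≠ 0)
    (h1 : a * E 0 0 * E 0 0 = a' * E 1 1 ∧ a' * E 1 0 = 0 ∧ a * E 1 0 = 0)
    (hr1 : ∀ j k, ∑ l, F j l * (E 0 0 * R1 l k + E 0 1 * R2 l k) = ∑ m, R1' j m * F m k)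
    (hr2 : ∀ j k, ∑ l, F j l * (E 1 0 * R1 l k + E 1 1 * R2 l k) = ∑ m, R2' j m * F m k)
    (hw : bil w12 w13 w23 (F 0) (F 1) = w12' * E 0 0 + t12' * E 1 0 ∧
      bil w12 w13 w23 (F 0) (F 2) = w13' * E 0 0 + t13' * E 1 0 ∧
      bil w12 w13 w23 (F 1) (F 2) = w23' * E 0 0 + t23' * E 1 0)
    (ht : bil t12 t13 t23 (F 0) (F 1) = w12' * E 0 1 + t12' * E 1 1 ∧
      bil t12 t13 t23 (F 0) (F 2) = w13' * E 0 1 + t13' * E 1 1 ∧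
      bil t12 t13 t23 (F 1) (F 2) = w23' * E 0 1 + t23' * E 1 1) :
      Iso (T23 a R1 R2 (An w12 w13 w23) (An t12 t13 t23))
        (T23 a' R1' R2' (An w12' w13' w23') (An t12' t13' t23')) := by
  obtain ⟨h1, h1', h1''⟩ := h1
  have h2 : a * E 0 0 * E 1 0 = 0 := by rw [mul_right_comm, h1'', zero_mul]
  obtain ⟨w1, w2, w3⟩ := hw
  obtain ⟨t1, t2, t3⟩ := ht
  have bs : ∀ a b c x y, bil a b c x y = - bil a b c y x := by intros; simp only [bil]; ring
  have b0 : ∀ a b c x, bil a b c x x = 0 := by intros; simp only [bil]; ring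
  refine isoOfBasis _ _ (li2 E hE) _ (li3 F hF) ?_ ?_ ?_
  · intro i j
    rw [mE_T23]
    ext k
    fin_cases i <;> fin_cases j <;> fin_cases k <;>
      simp [T23, h1, h1', h1'']
    simpa using h2
  · intro i j
    rw [mR_T23]
    ext k
    fin_cases i
    · simpa [T23] using hr1 j k
    · simpa [T23] using hr2 j k
  · intro i j
    rw [mG_T23]
    ext k
    fin_cases i <;> fin_cases j <;> fin_cases k <;>
      simp [T23, An, Fin.sum_univ_two, b0, bs _ _ _ (F 1) (F 0), bs _ _ _ (F 2) (F 0),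
        bs _ _ _ (F 2) (F 1), w1, w2, w3, t1, t2, t3] <;> ring

/-! ### Jordan identities -/

theorem hom0 {m n : ℕ} (x : Fin m → ℂ) : IsHom 0 ((x, 0) : GV m n) := Or.inl ⟨rfl, rfl⟩
theorem hom1 {m n : ℕ} (x : Fin n → ℂ) : IsHom 1 ((0, x) : GV m n) := Or.inr ⟨rfl, rfl⟩

theorem jR {m n : ℕ} {μ : Tensor m n} (hJ : IsJordanSuper μ) (w x y : Fin m → ℂ) (f : Fin n → ℂ) :
    mR μ (mE μ w x) (mR μ y f) + mR μ (mE μ w y) (mR μ x f) + mR μ (mE μ x y) (mR μ w f)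
      - mR μ x (mR μ w (mR μ y f)) - mR μ y (mR μ w (mR μ x f)) - mR μ (mE μ w (mE μ x y)) f
      = 0 := by
  have := congrArg Prod.snd
    (hJ.2 0 0 0 1 _ _ _ _ (hom0 w) (hom0 x) (hom0 y) (hom1 f))
  simpa [superJ, mulOf_eq, sgn] using this

theorem jC {m n : ℕ} {μ : Tensor m n} (hJ : IsJordanSuper μ) (x y z : Fin m → ℂ) (f : Fin n → ℂ) :
    mR μ (mE μ y z) (mR μ x f) + mR μ (mE μ x z) (mR μ y f) + mR μ (mE μ x y) (mR μ z f)
      - mR μ x (mR μ (mE μ y z) f) - mR μ y (mR μ (mE μ x z) f) - mR μ z (mR μ (mE μ x y) f)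
      = 0 := by
  have := congrArg Prod.snd
    (hJ.2 1 0 0 0 _ _ _ _ (hom1 f) (hom0 x) (hom0 y) (hom0 z))
  simpa [superJ, mulOf_eq, sgn] using this

theorem jG {m n : ℕ} {μ : Tensor m n} (hJ : IsJordanSuper μ) (a b : Fin m → ℂ) (f g : Fin n → ℂ) :
    mG μ (mR μ a f) (mR μ b g) + mG μ (mR μ b f) (mR μ a g) + mE μ (mG μ f g) (mE μ a b)
      - mE μ a (mG μ f (mR μ b g)) - mE μ b (mG μ f (mR μ a g)) + mG μ g (mR μ (mE μ a b) f)
      = 0 := by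
  have := congrArg Prod.fst
    (hJ.2 1 0 0 1 _ _ _ _ (hom1 f) (hom0 a) (hom0 b) (hom1 g))
  simpa [superJ, mulOf_eq, sgn] using this

theorem jK {m n : ℕ} {μ : Tensor m n} (hJ : IsJordanSuper μ) (a : Fin m → ℂ) (k f g : Fin n → ℂ) :
    mR μ (mG μ f g) (mR μ a k) + mR μ (mG μ k f) (mR μ a g) - mR μ (mG μ k g) (mR μ a f)
      - mR μ a (mR μ (mG μ f g) k) + mR μ (mG μ k (mR μ a g)) f - mR μ (mG μ k (mR μ a f)) g
      = 0 := by
  have := congrArg Prod.snd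
    (hJ.2 1 0 1 1 _ _ _ _ (hom1 k) (hom0 a) (hom1 f) (hom1 g))
  simpa [superJ, mulOf_eq, sgn, ← sub_eq_add_neg] using this

/-- `(u f) g = c u` forces `u = 0` or `c = 0`. -/
theorem nilG {m n : ℕ} {μ : Tensor m n} (h : JN μ) (u : Fin m → ℂ) (f g : Fin n → ℂ) (c : ℂ)
    (hc : mG μ (mR μ u f) g = c • u) (hu : u ≠ 0) : c = 0 := by
  by_contra h0
  have := nil2 h.2 (μ := μ) (a := (0, f)) (b := (0, g)) (x := (u, 0)) (c := -c) (by
    have e := mG_anti h.1 g (mR μ u f)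
    rw [hc] at e
    simp [mulOf_eq, e]) (by simpa using h0)
  exact hu (by simpa using this)

/-! ### Reduction to the list -/

/-- the conclusion of the classification -/
def Good (μ : Tensor 2 3) : Prop :=
  (∃ i : Fin 41, Iso μ (A23 i)) ∨ (∃ l : ℂ, l ≠ 0 ∧ Iso μ (A31 l)) ∨
    (∃ g : ℂ, g ≠ 0 ∧ Iso μ (A43 g)) ∨ (∃ p : ℂ, Iso μ (A44 p))

theorem Good.of_iso {μ ν : Tensor 2 3} (h : Iso μ ν) (hν : Good ν) : Good μ := by
  rcases hν with ⟨i, hi⟩ | ⟨l, hl, hi⟩ | ⟨l, hl, hi⟩ | ⟨l, hi⟩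
  · exact Or.inl ⟨i, h.trans' hi⟩
  · exact Or.inr (Or.inl ⟨l, hl, h.trans' hi⟩)
  · exact Or.inr (Or.inr (Or.inl ⟨l, hl, h.trans' hi⟩))
  · exact Or.inr (Or.inr (Or.inr ⟨l, h.trans' hi⟩))

theorem good_list (i : Fin 41) {μ ν : Tensor 2 3} (h : Iso μ ν) (e : A23 i = ν) : Good μ :=
  Or.inl ⟨i, e ▸ h⟩

theorem An0 : An 0 0 0 = 0 := by ext i j; fin_cases i <;> fin_cases j <;> simp [An]
theorem An12 : An 1 0 0 = W12 := by ext i j; fin_cases i <;> fin_cases j <;> simp [An, W12]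
theorem An13 : An 0 1 0 = W13 := by ext i j; fin_cases i <;> fin_cases j <;> simp [An, W13]
theorem An23 : An 0 0 1 = W23 := by ext i j; fin_cases i <;> fin_cases j <;> simp [An, W23]
theorem An13l (l : ℂ) : An 0 l 0 = l • W13 := by
  ext i j; fin_cases i <;> fin_cases j <;> simp [An, W13]
theorem Lo0 : Lo 0 0 0 = 0 := by ext i j; fin_cases i <;> fin_cases j <;> simp [Lo]

theorem skew (x y z : ℂ) (h : ¬ (x = 0 ∧ y = 0 ∧ z = 0)) : ∃ F : Fin 3 → Fin 3 → ℂ,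
    F 0 0 * F 1 1 * F 2 2 - F 0 0 * F 1 2 * F 2 1
      - F 0 1 * F 1 0 * F 2 2 + F 0 1 * F 1 2 * F 2 0 + F 0 2 * F 1 0 * F 2 1
      - F 0 2 * F 1 1 * F 2 0 ≠ 0 ∧ bil x y z (F 0) (F 1) = 1 ∧ bil x y z (F 0) (F 2) = 0 ∧
      bil x y z (F 1) (F 2) = 0 := by
  by_cases hx : x = 0
  · by_cases hy : y = 0
    · have hz : z ≠ 0 := by tauto
      refine ⟨![![0, z⁻¹, 0], ![0, 0, 1], ![z, -y, x]], ?_⟩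
      simp [bil, hx, hy, hz]
    · refine ⟨![![y⁻¹, 0, 0], ![0, 0, 1], ![z, -y, x]], ?_⟩
      simp [bil, hx, hy]
      try ring
  · refine ⟨![![x⁻¹, 0, 0], ![0, 1, 0], ![z, -y, x]], ?_⟩
    simp [bil, hx]
    first | ring | (field_simp; ring) | grind

/-- `J₀ J₁ = 0`, first form nonzero. -/
theorem case0 {a w12 w13 w23 t12 t13 t23 : ℂ} (h : ¬ (w12 = 0 ∧ w13 = 0 ∧ w23 = 0)) :
    Iso (T23 a 0 0 (An w12 w13 w23) (An t12 t13 t23)) (T23 a 0 0 W12 0) ∨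
    Iso (T23 a 0 0 (An w12 w13 w23) (An t12 t13 t23)) (T23 a 0 0 W12 W13) := by
  obtain ⟨F, hF, b1, b2, b3⟩ := skew _ _ _ h
  obtain ⟨s, c, d, hI⟩ : ∃ s c d : ℂ, Iso (T23 a 0 0 (An w12 w13 w23) (An t12 t13 t23))
      (T23 a 0 0 (An 1 0 0) (An s c d)) := by
    refine ⟨_, _, _, isoC a 0 0 1 0 0 (bil t12 t13 t23 (F 0) (F 1)) (bil t12 t13 t23 (F 0) (F 2))
      (bil t12 t13 t23 (F 1) (F 2)) ![![1, 0], ![0, 1]] F ?_ hF ?_ ?_ ?_ ?_ ?_⟩ <;>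
      simp [b1, b2, b3]
  by_cases hc : c = 0
  · by_cases hd : d = 0
    · left
      refine hI.trans' ?_
      have : Iso (T23 a 0 0 (An 1 0 0) (An s c d)) (T23 a 0 0 (An 1 0 0) (An 0 0 0)) := by
        apply isoC a 0 0 _ _ _ _ _ _ ![![1, s], ![0, 1]] ![![1, 0, 0], ![0, 1, 0], ![0, 0, 1]] <;>
          simp [bil, hc, hd]
      rw [An12, An0] at this
      rw [An12]
      exact this
    · right
      refine hI.trans' ?_
      rw [← An12, ← An13]
      apply isoC a 0 0 _ _ _ _ _ _ ![![1, s], ![0, 1]]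
        ![![0, 1, 0], ![-1, 0, 0], ![0, 0, d⁻¹]] <;>
        simp [bil, hc, hd]
  · right
    refine hI.trans' ?_
    rw [← An12, ← An13]
    apply isoC a 0 0 _ _ _ _ _ _ ![![1, s], ![0, 1]]
        ![![1, 0, 0], ![- d / c, 1, 0], ![0, 0, c⁻¹]] <;>
      simp [bil, hc]
    field_simp; ring

theorem good0 {a w12 w13 w23 t12 t13 t23 : ℂ} (ha : a = 0 ∨ a = 1) :
    Good (T23 a 0 0 (An w12 w13 w23) (An t12 t13 t23)) := by
  by_cases h : w12 = 0 ∧ w13 = 0 ∧ w23 = 0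
  · obtain ⟨rfl, rfl, rfl⟩ := h
    by_cases h' : t12 = 0 ∧ t13 = 0 ∧ t23 = 0
    · obtain ⟨rfl, rfl, rfl⟩ := h'
      rw [An0]
      rcases ha with rfl | rfl
      · exact good_list 0 (Iso.refl' _) rfl
      · exact good_list 20 (Iso.refl' _) rfl
    · obtain ⟨F, hF, b1, b2, b3⟩ := skew _ _ _ h'
      rcases ha with rfl | rfl
      · refine good_list 1 (isoC 0 0 0 1 0 0 0 0 0 ![![0, 1], ![1, 0]] F ?_ hF ?_ ?_ ?_ ?_ ?_) ?_
        case refine_7 => rw [An0, An12]; rfl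
        all_goals simp [b1, b2, b3]
        all_goals simp [bil]
      · refine good_list 22 (isoC 1 0 0 0 0 0 1 0 0 ![![1, 0], ![0, 1]] F ?_ hF ?_ ?_ ?_ ?_ ?_) ?_
        case refine_7 => rw [An0, An12]; rfl
        all_goals simp [b1, b2, b3]
        all_goals simp [bil]
  · rcases case0 (a := a) (t12 := t12) (t13 := t13) (t23 := t23) h with h | h
    · rcases ha with rfl | rfl
      · exact good_list 1 h rfl
      · exact good_list 21 h rfl
    · rcases ha with rfl | rfl
      · exact good_list 2 h rfl
      · exact good_list 23 h rfl

/-- evaluation of the even-odd action on vectors -/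
theorem vec3 (v : Fin 3 → ℂ) : v = ![v 0, v 1, v 2] := by
  ext i; fin_cases i <;> rfl

theorem case1 {a w t12 t13 t23 : ℂ} (ha : a = 0 ∨ a = 1) :
    Good (T23 a P21 0 (An 0 0 w) (An t12 t13 t23)) := by
  by_cases hw : w = 0
  · subst hw
    by_cases h13 : t13 = 0
    · by_cases h12 : t12 = 0
      · by_cases h23 : t23 = 0
        · subst h13 h12 h23
          rw [An0]
          rcases ha with rfl | rfl
          · exact good_list 3 (Iso.refl' _) rfl
          · exact good_list 24 (Iso.refl' _) rfl
        · have : Iso (T23 a P21 0 (An 0 0 0) (An t12 t13 t23))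
              (T23 a P21 0 (An 0 0 0) (An 0 0 1)) := by
            apply isoC a _ _ _ _ _ _ _ _ ![![1, 0], ![0, 1]]
              ![![1, 0, 0], ![0, 1, 0], ![0, 0, t23⁻¹]] <;>
            simp [bil, h13, h12, h23, P21, Fin.forall_fin_succ, Fin.sum_univ_three]
          rw [An0, An23] at this
          rw [An0]
          rcases ha with rfl | rfl
          · exact good_list 5 this rfl
          · exact good_list 25 this rfl
      · have : Iso (T23 a P21 0 (An 0 0 0) (An t12 t13 t23))
              (T23 a P21 0 (An 0 0 0) (An 1 0 0)) := by
          apply isoC a _ _ _ _ _ _ _ _ ![![t12, 0], ![0, t12 ^ 2]]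
            ![![t12, 0, 0], ![0, 1, 0], ![t23 / t12, 0, 1]] <;>
          simp [bil, h13, h12, P21, Fin.forall_fin_succ, Fin.sum_univ_three] <;>
          grind
        rw [An0, An12] at this
        rw [An0]
        rcases ha with rfl | rfl
        · exact good_list 4 this rfl
        · exact good_list 26 this rfl
    · have : Iso (T23 a P21 0 (An 0 0 0) (An t12 t13 t23))
              (T23 a P21 0 (An 0 0 0) (An 0 1 0)) := by
        apply isoC a _ _ _ _ _ _ _ _ ![![1, 0], ![0, 1]]
          ![![1, 0, 0], ![- t23 / t13, 1, - t12 / t13], ![0, 0, t13⁻¹]] <;>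
        simp [bil, h13, P21, Fin.forall_fin_succ, Fin.sum_univ_three] <;>
        grind
      rw [An0, An13] at this
      rw [An0]
      rcases ha with rfl | rfl
      · exact good_list 6 this rfl
      · exact good_list 27 this rfl
  · by_cases h13 : t13 = 0
    · by_cases h12 : t12 = 0
      · have : Iso (T23 a P21 0 (An 0 0 w) (An t12 t13 t23))
              (T23 a P21 0 (An 0 0 1) (An 0 0 0)) := by
          apply isoC a _ _ _ _ _ _ _ _ ![![1, t23 / w], ![0, 1]]
            ![![1, 0, 0], ![0, 1, 0], ![0, 0, w⁻¹]] <;>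
          simp [bil, h13, h12, hw, P21, Fin.forall_fin_succ, Fin.sum_univ_three] <;> grind
        rw [An23, An0] at this
        rcases ha with rfl | rfl
        · exact good_list 7 this rfl
        · exact good_list 28 this rfl
      · have : Iso (T23 a P21 0 (An 0 0 w) (An t12 t13 t23))
              (T23 a P21 0 (An 0 0 1) (An 1 0 0)) := by
          apply isoC a _ _ _ _ _ _ _ _ ![![t12, t12 * t23 / w], ![0, t12 ^ 2]]
            ![![t12, 0, 0], ![0, 1, 0], ![0, 0, t12 / w]] <;>
          simp [bil, h13, h12, hw, P21, Fin.forall_fin_succ, Fin.sum_univ_three] <;>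
          grind
        rw [An23, An12] at this
        rcases ha with rfl | rfl
        · exact good_list 8 this rfl
        · exact good_list 29 this rfl
    · have : Iso (T23 a P21 0 (An 0 0 w) (An t12 t13 t23))
              (T23 a P21 0 (An 0 0 1) (An 0 (t13 / w) 0)) := by
        apply isoC a _ _ _ _ _ _ _ _ ![![1, t23 / w], ![0, 1]]
          ![![1, 0, 0], ![0, 1, - t12 / t13], ![0, 0, w⁻¹]] <;>
        simp [bil, h13, hw, P21, Fin.forall_fin_succ, Fin.sum_univ_three] <;> grind
      rcases ha with rfl | rfl
      · have h2 : Iso (T23 0 P21 0 (An 0 0 1) (An 0 (t13 / w) 0))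
              (T23 0 P21 0 (An 0 0 1) (An 0 1 0)) := by
          apply isoC 0 _ _ _ _ _ _ _ _ ![![1, 0], ![0, t13 / w]]
            ![![1, 0, 0], ![0, 1, 0], ![0, 0, 1]] <;>
          simp [bil, h13, hw, P21, Fin.forall_fin_succ, Fin.sum_univ_three]
        rw [An23, An13] at h2
        rw [An23] at this
        exact good_list 9 (this.trans' h2) rfl
      · rw [An23, An13l] at this
        exact Or.inr (Or.inl ⟨t13 / w, div_ne_zero h13 hw, this⟩)

theorem exists_sqrt (c : ℂ) : ∃ s : ℂ, s ^ 2 = c := IsAlgClosed.exists_pow_nat_eq c (by norm_num)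

theorem case2 {a t13 t23 : ℂ} (ha : a = 0 ∨ a = 1) :
    Good (T23 a (P21 + P32) 0 (An 0 0 0) (An 0 t13 t23)) := by
  by_cases h13 : t13 = 0
  · by_cases h23 : t23 = 0
    · subst h13 h23
      rw [An0]
      rcases ha with rfl | rfl
      · exact good_list 15 (Iso.refl' _) rfl
      · exact good_list 30 (Iso.refl' _) rfl
    · have : Iso (T23 a (P21 + P32) 0 (An 0 0 0) (An 0 t13 t23))
              (T23 a (P21 + P32) 0 (An 0 0 0) (An 0 0 1)) := by
        apply isoC a _ _ _ _ _ _ _ _ ![![t23, 0], ![0, t23 ^ 2]]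
          ![![t23 ^ 2, 0, 0], ![0, t23, 0], ![0, 0, 1]] <;>
        simp [bil, h13, h23, P21, P32, Fin.forall_fin_succ, Fin.sum_univ_three] <;> ring
      rw [An0, An23] at this
      rw [An0]
      rcases ha with rfl | rfl
      · exact good_list 16 this rfl
      · exact good_list 32 this rfl
  · have : Iso (T23 a (P21 + P32) 0 (An 0 0 0) (An 0 t13 t23))
              (T23 a (P21 + P32) 0 (An 0 0 0) (An 0 1 0)) := by
      obtain ⟨s, hs⟩ := exists_sqrt t13⁻¹
      have hs0 : s ≠ 0 := by
        rintro rfl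
        simp at hs
        exact h13 hs.symm
      apply isoC a _ _ _ _ _ _ _ _ ![![1, 0], ![0, 1]]
          ![![s, 0, 0], ![- s * t23 / t13, s, 0], ![0, - s * t23 / t13, s]] <;>
      simp [bil, hs0, P21, P32, Fin.forall_fin_succ, Fin.sum_univ_three] <;> grind
    rw [An0, An13] at this
    rw [An0]
    rcases ha with rfl | rfl
    · exact good_list 17 this rfl
    · exact good_list 31 this rfl

/-! ### The annihilator direction: `R2 = 0` -/

theorem goodP21 {a w12 w13 w23 t12 t13 t23 : ℂ} (ha : a = 0 ∨ a = 1)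
    (hJ : JN (T23 a P21 0 (An w12 w13 w23) (An t12 t13 t23))) :
    Good (T23 a P21 0 (An w12 w13 w23) (An t12 t13 t23)) := by
  have h12 : w12 = 0 := by
    by_contra h
    refine h (nilG hJ ![w12, t12] ![0, 1, 0] ![0, 1, 0] w12 ?_ ?_)
    · rw [mG_T23, mR_T23]; simp [bil, P21, Fin.sum_univ_three, mul_comm]
    · intro h0; exact h (congrFun h0 0)
  have h13 : w13 = 0 := by
    by_contra h
    refine h (nilG hJ ![w13, t13] ![0, 1, 0] ![0, 0, 1] w13 ?_ ?_)
    · rw [mG_T23, mR_T23]; simp [bil, P21, Fin.sum_univ_three, mul_comm]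
    · intro h0; exact h (congrFun h0 0)
  subst h12 h13
  exact case1 ha

theorem goodP2132 {a w12 w13 w23 t12 t13 t23 : ℂ} (ha : a = 0 ∨ a = 1)
    (hJ : JN (T23 a (P21 + P32) 0 (An w12 w13 w23) (An t12 t13 t23))) :
    Good (T23 a (P21 + P32) 0 (An w12 w13 w23) (An t12 t13 t23)) := by
  have k1 := jK hJ.1 ![1, 0] ![1, 0, 0] ![0, 0, 1] ![0, 1, 0]
  have k2 := jK hJ.1 ![1, 0] ![0, 1, 0] ![0, 0, 1] ![0, 1, 0]
  have k3 := jK hJ.1 ![1, 0] ![0, 0, 1] ![0, 0, 1] ![0, 1, 0]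
  have g1 := jG hJ.1 ![1, 0] ![1, 0] ![0, 1, 0] ![0, 0, 1]
  have k1a := congrFun k1 0
  have k1b := congrFun k1 1
  have k2a := congrFun k2 0
  have k2b := congrFun k2 1
  have k3a := congrFun k3 0
  have k3b := congrFun k3 1
  have g1b := congrFun g1 1
  simp [mE_T23, mR_T23, mG_T23, bil, P21, P32, Fin.sum_univ_three] at k1a k1b k2a k2b k3a k3b g1b
  have h1 : w12 = 0 := by grind
  have h2 : w13 = 0 := by grind
  have h3 : w23 = 0 := by grind
  have h4 : t12 = 0 := by grind
  subst h1 h2 h3 h4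
  exact case2 ha

theorem goodR2 {a p q r w12 w13 w23 t12 t13 t23 : ℂ} (ha : a = 0 ∨ a = 1)
    (hJ : JN (T23 a (Lo p q r) 0 (An w12 w13 w23) (An t12 t13 t23))) :
    Good (T23 a (Lo p q r) 0 (An w12 w13 w23) (An t12 t13 t23)) := by
  by_cases hp : p = 0
  · by_cases hq : q = 0
    · by_cases hr : r = 0
      · subst hp hq hr
        rw [Lo0]
        exact good0 ha
      · obtain ⟨_, _, _, _, _, _, hI⟩ := stdC hJ a P21 0 ![![1, 0], ![0, 1]]
          ![![r, 0, 0], ![0, 0, 1], ![0, 1, 0]] (by simp) (by simp [hr]) (by simp)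
          (by simp [hp, hq, Lo, P21, Fin.forall_fin_succ, Fin.sum_univ_three])
          (by simp)
        exact Good.of_iso hI (goodP21 ha (jn_iso hI hJ))
    · obtain ⟨_, _, _, _, _, _, hI⟩ := stdC hJ a P21 0 ![![1, 0], ![0, 1]]
          ![![r, q, 0], ![0, 0, 1], ![1, 0, 0]] (by simp) (by simp [hq]) (by simp)
          (by simp [hp, Lo, P21, Fin.forall_fin_succ, Fin.sum_univ_three])
          (by simp)
      exact Good.of_iso hI (goodP21 ha (jn_iso hI hJ))
  · by_cases hq : q = 0
    · obtain ⟨_, _, _, _, _, _, hI⟩ := stdC hJ a P21 0 ![![1, 0], ![0, 1]]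
          ![![p, 0, 0], ![0, 1, 0], ![0, - r / p, 1]] (by simp) (by simp [hp]) (by simp)
          (by simp [hp, hq, Lo, P21, Fin.forall_fin_succ, Fin.sum_univ_three])
          (by simp)
      exact Good.of_iso hI (goodP21 ha (jn_iso hI hJ))
    · obtain ⟨_, _, _, _, _, _, hI⟩ := stdC hJ a (P21 + P32) 0 ![![1, 0], ![0, 1]]
          ![![p * q, 0, 0], ![r, q, 0], ![0, 0, 1]] (by simp) (by simp [hp, hq]) (by simp)
          (by simp [Lo, P21, P32, Fin.forall_fin_succ, Fin.sum_univ_three]; try ring)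
          (by simp)
      exact Good.of_iso hI (goodP2132 ha (jn_iso hI hJ))

/-! ### `a = 0`, two dimensional action -/

theorem good11 {w12 w13 w23 t12 t13 t23 : ℂ}
    (hJ : JN (T23 0 P21 P31 (An w12 w13 w23) (An t12 t13 t23))) :
    Good (T23 0 P21 P31 (An w12 w13 w23) (An t12 t13 t23)) := by
  have k1 := jK hJ.1 ![1, 0] ![1, 0, 0] ![0, 0, 1] ![0, 1, 0]
  have k2 := jK hJ.1 ![1, 0] ![0, 1, 0] ![0, 0, 1] ![0, 1, 0]
  have k3 := jK hJ.1 ![1, 0] ![0, 0, 1] ![0, 0, 1] ![0, 1, 0]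
  have k4 := jK hJ.1 ![0, 1] ![1, 0, 0] ![0, 1, 0] ![0, 0, 1]
  have k5 := jK hJ.1 ![0, 1] ![0, 1, 0] ![0, 1, 0] ![0, 0, 1]
  have k6 := jK hJ.1 ![0, 1] ![0, 0, 1] ![0, 1, 0] ![0, 0, 1]
  have k1a := congrFun k1 0
  have k2a := congrFun k2 0
  have k3a := congrFun k3 0
  have k4a := congrFun k4 0
  have k5a := congrFun k5 0
  have k6a := congrFun k6 0
  simp [mR_T23, mG_T23, bil, P21, P31, Fin.sum_univ_three] at k1a k2a k3a k4a k5a k6a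
  have h1 : w12 = 0 := by grind
  have h2 : w13 = 0 := by grind
  have h3 : t12 = 0 := by grind
  have h4 : t13 = 0 := by grind
  subst h1 h2 h3 h4
  clear k1 k2 k3 k4 k5 k6 k1a k2a k3a k4a k5a k6a
  by_cases ht : t23 = 0
  · by_cases hw : w23 = 0
    · subst ht hw
      rw [An0]
      exact good_list 10 (Iso.refl' _) rfl
    · have : Iso (T23 0 P21 P31 (An 0 0 w23) (An 0 0 t23))
              (T23 0 P21 P31 (An 0 0 0) (An 0 0 1)) := by
        apply isoC 0 _ _ _ _ _ _ _ _ ![![0, -w23], ![-w23, 0]]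
          ![![-w23, 0, 0], ![0, 0, 1], ![0, 1, 0]] <;>
        simp [bil, ht, hw, P21, P31, Fin.forall_fin_succ, Fin.sum_univ_three]
      rw [An0, An23] at this
      exact good_list 11 this rfl
  · have : Iso (T23 0 P21 P31 (An 0 0 w23) (An 0 0 t23))
              (T23 0 P21 P31 (An 0 0 0) (An 0 0 1)) := by
      apply isoC 0 _ _ _ _ _ _ _ _ ![![t23, 0], ![t23 * w23, t23 * t23]]
          ![![t23 ^ 2, 0, 0], ![0, t23, -w23], ![0, 0, 1]] <;>
        simp [bil, ht, P21, P31, Fin.forall_fin_succ, Fin.sum_univ_three] <;> grind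
    rw [An0, An23] at this
    exact good_list 11 this rfl

theorem good13 {w12 w13 w23 t12 t13 t23 : ℂ}
    (hJ : JN (T23 0 P21 P23 (An w12 w13 w23) (An t12 t13 t23))) :
    Good (T23 0 P21 P23 (An w12 w13 w23) (An t12 t13 t23)) := by
  have hv : ∀ α β : ℂ, w13 * β - t13 * α = 0 := by
    intro α β
    by_contra h
    refine h (nilG hJ ![w13, t13] ![0, 1, 0] ![α, 0, β] _ ?_ ?_)
    · rw [mG_T23, mR_T23]; simp [bil, P21, P23, Fin.sum_univ_three]
      constructor <;> ring
    · intro h0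
      have h1 := congrFun h0 0
      have h2 := congrFun h0 1
      simp at h1 h2
      simp [h1, h2] at h
  have h13 : w13 = 0 := by simpa using hv 0 1
  have k13 : t13 = 0 := by simpa using hv 1 0
  subst h13 k13
  have key : ∀ x y c : ℂ, w12 * x - w23 * y = c * x → t12 * x - t23 * y = c * y →
      (x ≠ 0 ∨ y ≠ 0) → c = 0 := by
    intro x y c h1 h2 h3
    refine nilG hJ ![x, y] ![0, 1, 0] ![0, 1, 0] c ?_ ?_
    · rw [mG_T23, mR_T23]; simp [bil, P21, P23, Fin.sum_univ_three]
      constructor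
      · linear_combination h1
      · linear_combination h2
    · intro h0
      have h1 := congrFun h0 0
      have h2 := congrFun h0 1
      simp at h1 h2
      simp [h1, h2] at h3
  have hM : t23 = w12 ∧ w12 ^ 2 = w23 * t12 := by
    -- every eigenvalue vanishes
    have ev : ∀ c : ℂ, (w12 - c) * (-t23 - c) + w23 * t12 = 0 → c = 0 := by
      intro c hc
      by_cases h1 : w12 - c = 0 ∧ w23 = 0
      · by_cases h2 : t12 = 0 ∧ t23 + c = 0
        · exact key 1 0 c (by linear_combination h1.1) (by linear_combination h2.1) (by simp)
        · refine key (t23 + c) t12 c ?_ ?_ (by tauto)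
          · linear_combination (t23 + c) * h1.1 - t12 * h1.2
          · ring
      · refine key w23 (w12 - c) c (by ring) (by linear_combination hc) (by tauto)
    obtain ⟨s, hs⟩ := exists_sqrt ((w12 - t23) ^ 2 / 4 + (w12 * t23 - w23 * t12))
    have e1 := ev ((w12 - t23) / 2 + s) (by linear_combination hs)
    have e2 := ev ((w12 - t23) / 2 - s) (by linear_combination hs)
    have e3 : t23 = w12 := by linear_combination - e1 - e2
    have e4 : s = 0 := by linear_combination (e1 - e2) / 2
    subst e3 e4
    refine ⟨rfl, ?_⟩
    linear_combination - hs
  obtain ⟨rfl, hM⟩ := hM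
  by_cases ht : t12 = 0
  · have h1 : t23 = 0 := by simpa [ht] using hM
    subst ht h1
    by_cases hw : w23 = 0
    · subst hw
      rw [An0]
      exact good_list 12 (Iso.refl' _) rfl
    · have : Iso (T23 0 P21 P23 (An 0 0 w23) (An 0 0 0))
              (T23 0 P21 P23 (An 0 0 0) (An 1 0 0)) := by
        apply isoC 0 _ _ _ _ _ _ _ _ ![![0, 1], ![-w23, 0]]
          ![![0, 0, 1], ![0, 1, 0], ![-w23, 0, 0]] <;>
        simp [bil, hw, P21, P23, Fin.forall_fin_succ, Fin.sum_univ_three]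
      rw [An0, An12] at this
      rw [An0]
      exact good_list 13 this rfl
  · have : Iso (T23 0 P21 P23 (An t23 0 w23) (An t12 0 t23))
              (T23 0 P21 P23 (An 0 0 0) (An 1 0 0)) := by
      apply isoC 0 _ _ _ _ _ _ _ _ ![![1, 0], ![t23, t12]]
          ![![1, 0, 0], ![0, 1, 0], ![t23, 0, t12]] <;>
        simp [bil, ht, P21, P23, Fin.forall_fin_succ, Fin.sum_univ_three] <;> grind
    rw [An0, An12] at this
    exact good_list 13 this rfl

theorem good15 {w12 w13 w23 t12 t13 t23 : ℂ}
    (hJ : JN (T23 0 P21 P32 (An w12 w13 w23) (An t12 t13 t23))) :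
    Good (T23 0 P21 P32 (An w12 w13 w23) (An t12 t13 t23)) := by
  have k1 := jG hJ.1 ![1, 0] ![0, 1] ![0, 1, 0] ![0, 0, 1]
  have k2 := jK hJ.1 ![1, 0] ![0, 0, 1] ![0, 1, 0] ![0, 0, 1]
  have k3 := jK hJ.1 ![0, 1] ![0, 0, 1] ![0, 1, 0] ![0, 0, 1]
  have k1a := congrFun k1 0
  have k1b := congrFun k1 1
  have k2a := congrFun k2 0
  have k2b := congrFun k2 1
  have k3a := congrFun k3 0
  have k3b := congrFun k3 1
  simp [mE_T23, mR_T23, mG_T23, bil, P21, P32, Fin.sum_univ_three] at k1a k1b k2a k2b k3a k3b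
  have h1 : w12 = 0 := by grind
  have h2 : t12 = 0 := by grind
  have h3 : t13 = 0 := by grind
  have h4 : t23 = 0 := by grind
  have h5 : w23 = 0 := by grind
  have h6 : w13 = 0 := by
    refine nilG hJ ![1, 0] ![0, 1, 0] ![0, 0, 1] w13 ?_ ?_
    · rw [mG_T23, mR_T23]; simp [bil, P21, P32, Fin.sum_univ_three, h3]
    · intro h0; simpa using congrFun h0 0
  subst h1 h2 h3 h4 h5 h6
  rw [An0]
  exact good_list 14 (Iso.refl' _) rfl

theorem good19 {w12 w13 w23 t12 t13 t23 : ℂ}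
    (hJ : JN (T23 0 (P21 + P32) P31 (An w12 w13 w23) (An t12 t13 t23))) :
    Good (T23 0 (P21 + P32) P31 (An w12 w13 w23) (An t12 t13 t23)) := by
  have h3 : t13 = 0 := by
    by_contra h
    by_cases hw : w13 = 0
    · refine h (nilG hJ ![0, 1] ![0, 0, 1] ![0, 0, 1] t13 ?_ ?_)
      · rw [mG_T23, mR_T23]; simp [bil, P21, P31, P32, Fin.sum_univ_three, hw]
      · intro h0; simpa using congrFun h0 1
    · have k1 := jK hJ.1 ![1, 0] ![0, 0, 1] ![0, 0, 1] ![0, 1, 0]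
      have k1a := congrFun k1 0
      have k1b := congrFun k1 1
      simp [mE_T23, mR_T23, mG_T23, bil, P21, P31, P32, Fin.sum_univ_three] at k1a k1b
      grind
  have k1 := jK hJ.1 ![1, 0] ![1, 0, 0] ![0, 0, 1] ![0, 1, 0]
  have k2 := jK hJ.1 ![1, 0] ![0, 1, 0] ![0, 0, 1] ![0, 1, 0]
  have k3 := jK hJ.1 ![1, 0] ![0, 0, 1] ![0, 0, 1] ![0, 1, 0]
  have g1 := jG hJ.1 ![1, 0] ![1, 0] ![0, 1, 0] ![0, 0, 1]
  have k1a := congrFun k1 0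
  have k1b := congrFun k1 1
  have k2a := congrFun k2 0
  have k2b := congrFun k2 1
  have k3a := congrFun k3 0
  have k3b := congrFun k3 1
  have g1a := congrFun g1 0
  have g1b := congrFun g1 1
  simp [mE_T23, mR_T23, mG_T23, bil, P21, P31, P32, Fin.sum_univ_three]
    at k1a k1b k2a k2b k3a k3b g1a g1b
  have h1 : w12 = 0 := by grind
  have h2 : w13 = 0 := by grind
  have h4 : t12 = 0 := by grind
  have h5 : w23 = 0 := by grind
  subst h1 h2 h3 h4 h5
  clear k1 k2 k3 g1 k1a k2a k3a k1b k2b k3b g1a g1b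
  by_cases ht : t23 = 0
  · subst ht
    rw [An0]
    exact good_list 18 (Iso.refl' _) rfl
  · have : Iso (T23 0 (P21 + P32) P31 (An 0 0 0) (An 0 0 t23))
              (T23 0 (P21 + P32) P31 (An 0 0 0) (An 0 0 1)) := by
      apply isoC 0 _ _ _ _ _ _ _ _ ![![t23, 0], ![0, t23 ^ 2]]
          ![![t23 ^ 2, 0, 0], ![0, t23, 0], ![0, 0, 1]] <;>
        simp [bil, ht, P21, P31, P32, Fin.forall_fin_succ, Fin.sum_univ_three] <;> grind
    rw [An0, An23] at this
    rw [An0]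
    exact good_list 19 this rfl

theorem mix0 {p1 q1 r1 p2 q2 r2 w12 w13 w23 t12 t13 t23 : ℂ}
    (hJ : JN (T23 0 (Lo p1 q1 r1) (Lo p2 q2 r2) (An w12 w13 w23) (An t12 t13 t23)))
    (x y z u : ℂ) (h : x * u - y * z ≠ 0) : ∃ w12' w13' w23' t12' t13' t23' : ℂ,
      Iso (T23 0 (Lo p1 q1 r1) (Lo p2 q2 r2) (An w12 w13 w23) (An t12 t13 t23))
        (T23 0 (Lo (x * p1 + y * p2) (x * q1 + y * q2) (x * r1 + y * r2))
          (Lo (z * p1 + u * p2) (z * q1 + u * q2) (z * r1 + u * r2))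
          (An w12' w13' w23') (An t12' t13' t23')) := by
  refine stdC hJ 0 _ _ ![![x, y], ![z, u]] ![![1, 0, 0], ![0, 1, 0], ![0, 0, 1]]
    (by simpa using h) (by simp) (by simp) ?_ ?_ <;>
    simp [Lo, Fin.forall_fin_succ, Fin.sum_univ_three]

theorem goodD1 {r s w12 w13 w23 t12 t13 t23 : ℂ}
    (hJ : JN (T23 0 (Lo 1 0 r) (Lo 0 1 s) (An w12 w13 w23) (An t12 t13 t23))) :
    Good (T23 0 (Lo 1 0 r) (Lo 0 1 s) (An w12 w13 w23) (An t12 t13 t23)) := by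
  obtain ⟨_, _, _, _, _, _, hI⟩ := stdC hJ 0 P21 P32 ![![1, 0], ![0, 1]]
    ![![1, 0, 0], ![s, 1, 0], ![0, -r, 1]] (by simp) (by simp) (by simp)
    (by simp [Lo, P21, Fin.forall_fin_succ, Fin.sum_univ_three])
    (by simp [Lo, P32, Fin.forall_fin_succ, Fin.sum_univ_three])
  exact Good.of_iso hI (good15 (jn_iso hI hJ))

theorem goodD0 {p q s r w12 w13 w23 t12 t13 t23 : ℂ}
    (hJ : JN (T23 0 (Lo p q s) (Lo 0 0 r) (An w12 w13 w23) (An t12 t13 t23))) :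
    Good (T23 0 (Lo p q s) (Lo 0 0 r) (An w12 w13 w23) (An t12 t13 t23)) := by
  by_cases hr : r = 0
  · subst hr
    rw [Lo0] at hJ ⊢
    exact goodR2 (Or.inl rfl) hJ
  by_cases hp : p = 0
  · by_cases hq : q = 0
    · obtain ⟨_, _, _, _, _, _, hI⟩ := mix0 hJ 0 1 r (-s) (by simpa using hr)
      have e : Lo (r * p + -s * 0) (r * q + -s * 0) (r * s + -s * r) = 0 := by
        rw [← Lo0]; congr 1 <;> simp [hp, hq]; ring
      rw [e] at hI
      exact Good.of_iso hI (goodR2 (Or.inl rfl) (jn_iso hI hJ))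
    · obtain ⟨_, _, _, _, _, _, hI⟩ := stdC hJ 0 P21 P23 ![![1, - s / r], ![0, 1]]
        ![![0, q, 0], ![0, 0, 1], ![r, 0, 0]] (by simp) (by simp [hq, hr]) (by simp)
        (by simp [hp, hr, Lo, P21, Fin.forall_fin_succ, Fin.sum_univ_three])
        (by simp [Lo, P23, Fin.forall_fin_succ, Fin.sum_univ_three])
      exact Good.of_iso hI (good13 (jn_iso hI hJ))
  · by_cases hq : q = 0
    · obtain ⟨_, _, _, _, _, _, hI⟩ := stdC hJ 0 P21 P31 ![![p⁻¹, - s / r / p], ![0, r⁻¹]]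
        ![![1, 0, 0], ![0, 1, 0], ![0, 0, 1]] (by simp [hp, hr]) (by simp) (by simp)
        (by simp [hp, hq, Lo, P21, Fin.forall_fin_succ, Fin.sum_univ_three]; try grind)
        (by simp [hr, Lo, P31, Fin.forall_fin_succ, Fin.sum_univ_three])
      exact Good.of_iso hI (good11 (jn_iso hI hJ))
    · obtain ⟨_, _, _, _, _, _, hI⟩ := stdC hJ 0 (P21 + P32) P31 ![![1, - s / r], ![0, p * q / r]]
        ![![p * q, 0, 0], ![0, q, 0], ![0, 0, 1]] (by simp [hp, hq, hr]) (by simp [hp, hq]) (by simp)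
        (by simp [hr, Lo, P21, P32, Fin.forall_fin_succ, Fin.sum_univ_three]; try ring)
        (by simp [hr, Lo, P31, Fin.forall_fin_succ, Fin.sum_univ_three])
      exact Good.of_iso hI (good19 (jn_iso hI hJ))

theorem goodA0 {p1 q1 r1 p2 q2 r2 w12 w13 w23 t12 t13 t23 : ℂ}
    (hJ : JN (T23 0 (Lo p1 q1 r1) (Lo p2 q2 r2) (An w12 w13 w23) (An t12 t13 t23))) :
    Good (T23 0 (Lo p1 q1 r1) (Lo p2 q2 r2) (An w12 w13 w23) (An t12 t13 t23)) := by
  by_cases hD : p1 * q2 - p2 * q1 = 0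
  · obtain ⟨x, y, z, u, h, h1, h2⟩ : ∃ x y z u : ℂ, x * u - y * z ≠ 0 ∧
        z * p1 + u * p2 = 0 ∧ z * q1 + u * q2 = 0 := by
      by_cases h1 : p1 = 0
      · by_cases h2 : q1 = 0
        · exact ⟨0, 1, 1, 0, by simp, by simp [h1], by simp [h2]⟩
        · exact ⟨1, 0, - q2, q1, by simpa using h2, by grind, by ring⟩
      · exact ⟨1, 0, - p2, p1, by simpa using h1, by ring, by grind⟩
    obtain ⟨_, _, _, _, _, _, hI⟩ := mix0 hJ x y z u h
    rw [h1, h2] at hI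
    exact Good.of_iso hI (goodD0 (jn_iso hI hJ))
  · obtain ⟨_, _, _, _, _, _, hI⟩ := mix0 hJ (q2 / (p1 * q2 - p2 * q1)) (- q1 / (p1 * q2 - p2 * q1))
      (- p2 / (p1 * q2 - p2 * q1)) (p1 / (p1 * q2 - p2 * q1)) (by grind)
    have e1 : (q2 / (p1 * q2 - p2 * q1)) * p1 + (- q1 / (p1 * q2 - p2 * q1)) * p2 = 1 := by grind
    have e2 : (q2 / (p1 * q2 - p2 * q1)) * q1 + (- q1 / (p1 * q2 - p2 * q1)) * q2 = 0 := by grind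
    have e3 : (- p2 / (p1 * q2 - p2 * q1)) * p1 + (p1 / (p1 * q2 - p2 * q1)) * p2 = 0 := by grind
    have e4 : (- p2 / (p1 * q2 - p2 * q1)) * q1 + (p1 / (p1 * q2 - p2 * q1)) * q2 = 1 := by grind
    rw [e1, e2, e3, e4] at hI
    exact Good.of_iso hI (goodD1 (jn_iso hI hJ))

/-! ### `a = 1`, `e₂` acts nontrivially -/

theorem goodZY {z y w12 w13 w23 t12 t13 t23 : ℂ}
    (hJ : JN (T23 1 (z • P23 + y • P31) P21 (An w12 w13 w23) (An t12 t13 t23))) :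
    Good (T23 1 (z • P23 + y • P31) P21 (An w12 w13 w23) (An t12 t13 t23)) := by
  have g1 := jG hJ.1 ![1, 0] ![1, 0] ![0, 1, 0] ![0, 1, 0]
  have g2 := jG hJ.1 ![1, 0] ![1, 0] ![0, 1, 0] ![0, 0, 1]
  have g3 := jG hJ.1 ![1, 0] ![1, 0] ![0, 0, 1] ![0, 1, 0]
  have g1a := congrFun g1 0
  have g1b := congrFun g1 1
  have g2a := congrFun g2 0
  have g2b := congrFun g2 1
  have g3a := congrFun g3 0
  have g3b := congrFun g3 1
  simp [mE_T23, mR_T23, mG_T23, bil, P21, P31, P23, Fin.sum_univ_three]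
    at g1a g1b g2a g2b g3a g3b
  have h1 : w12 = 0 := by grind
  have h2 : w13 = 0 := by grind
  have h3 : t12 = -2 * z * w23 := by grind
  have h4 : t13 = 0 := by grind
  have h5 : z * w23 = 0 := by
    have : t12 = 0 := by
      refine nilG hJ ![0, 1] ![0, 1, 0] ![0, 1, 0] t12 ?_ ?_
      · rw [mG_T23, mR_T23]; simp [bil, P21, P31, P23, Fin.sum_univ_three, h1]
      · intro h0; simpa using congrFun h0 1
    grind
  have h6 : t12 = 0 := by grind
  subst h1 h2 h4 h6
  clear g1 g2 g3 g1a g1b g2a g2b g3a g3b h3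
  by_cases hz : z = 0
  · subst hz
    rw [zero_smul, zero_add] at hJ ⊢
    by_cases hy : y = 0
    · subst hy
      rw [zero_smul] at hJ ⊢
      by_cases hw : w23 = 0
      · by_cases ht : t23 = 0
        · subst hw ht
          rw [An0]
          exact good_list 33 (Iso.refl' _) rfl
        · have : Iso (T23 1 0 P21 (An 0 0 w23) (An 0 0 t23))
              (T23 1 0 P21 (An 0 0 0) (An 0 0 1)) := by
            apply isoC 1 _ _ _ _ _ _ _ _ ![![1, 0], ![0, 1]]
              ![![1, 0, 0], ![0, 1, 0], ![0, 0, t23⁻¹]] <;>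
            simp [bil, ht, hw, P21, Fin.forall_fin_succ, Fin.sum_univ_three]
          rw [An0, An23] at this
          exact good_list 34 this rfl
      · by_cases ht : t23 = 0
        · have : Iso (T23 1 0 P21 (An 0 0 w23) (An 0 0 t23))
              (T23 1 0 P21 (An 0 0 1) (An 0 0 0)) := by
            apply isoC 1 _ _ _ _ _ _ _ _ ![![1, 0], ![0, 1]]
              ![![1, 0, 0], ![0, 1, 0], ![0, 0, w23⁻¹]] <;>
            simp [bil, ht, hw, P21, Fin.forall_fin_succ, Fin.sum_univ_three]
          rw [An0, An23] at this
          exact good_list 35 this rfl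
        · have : Iso (T23 1 0 P21 (An 0 0 w23) (An 0 0 t23))
              (T23 1 P21 P21 (An 0 0 1) (An 0 0 0)) := by
            apply isoC 1 _ _ _ _ _ _ _ _ ![![t23 / w23, (t23 / w23) ^ 2], ![0, (t23 / w23) ^ 2]]
              ![![(t23 / w23) ^ 2, 0, 0], ![0, 1, 0], ![0, 0, t23 / w23 / w23]] <;>
            simp [bil, ht, hw, P21, Fin.forall_fin_succ, Fin.sum_univ_three] <;> grind
          rw [An0, An23] at this
          exact good_list 36 this rfl
    · by_cases hw : w23 = 0
      · by_cases ht : t23 = 0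
        · have : Iso (T23 1 (y • P31) P21 (An 0 0 w23) (An 0 0 t23))
              (T23 1 P31 P21 (An 0 0 0) (An 0 0 0)) := by
            apply isoC 1 _ _ _ _ _ _ _ _ ![![1, 0], ![0, 1]]
              ![![1, 0, 0], ![0, 1, 0], ![0, 0, y⁻¹]] <;>
            simp [bil, ht, hw, hy, P21, P31, Fin.forall_fin_succ, Fin.sum_univ_three]
          rw [An0] at this
          exact good_list 37 this rfl
        · have : Iso (T23 1 (y • P31) P21 (An 0 0 w23) (An 0 0 t23))
              (T23 1 P31 P21 (An 0 0 0) (An 0 0 1)) := by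
            apply isoC 1 _ _ _ _ _ _ _ _ ![![t23 / y, 0], ![0, (t23 / y) ^ 2]]
              ![![(t23 / y) ^ 2, 0, 0], ![0, 1, 0], ![0, 0, t23 / y / y]] <;>
            simp [bil, ht, hw, hy, P21, P31, Fin.forall_fin_succ, Fin.sum_univ_three] <;> grind
          rw [An0, An23] at this
          exact good_list 38 this rfl
      · have : Iso (T23 1 (y • P31) P21 (An 0 0 w23) (An 0 0 t23))
              (T23 1 P31 P21 (An 0 0 1) (An 0 0 0)) := by
          obtain ⟨s, hs⟩ := exists_sqrt (y / w23)
          have hs0 : s ≠ 0 := by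
            rintro rfl
            exact div_ne_zero hy hw (by simpa using hs.symm)
          apply isoC 1 _ _ _ _ _ _ _ _ ![![1, t23 / w23], ![0, 1]]
            ![![s, 0, 0], ![0, s, - (t23 / w23) * s / y], ![0, 0, s / y]] <;>
          simp [bil, hs0, hy, P21, P31, Fin.forall_fin_succ, Fin.sum_univ_three] <;>
          grind
        rw [An0, An23] at this
        exact good_list 39 this rfl
  · obtain rfl : w23 = 0 := by simpa [hz] using h5
    by_cases ht : t23 = 0
    · have : Iso (T23 1 (z • P23 + y • P31) P21 (An 0 0 0) (An 0 0 t23))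
            (T23 1 (P23 + (z * y) • P31) P21 (An 0 0 0) (An 0 0 0)) := by
        apply isoC 1 _ _ _ _ _ _ _ _ ![![1, 0], ![0, 1]]
            ![![1, 0, 0], ![0, 1, 0], ![0, 0, z]] <;>
        simp [bil, ht, hz, P21, P31, P23, Fin.forall_fin_succ, Fin.sum_univ_three]
      rw [An0] at this
      rw [An0]
      by_cases hy : y = 0
      · subst hy
        simp only [mul_zero, zero_smul, add_zero] at this ⊢
        exact good_list 40 this rfl
      · exact Or.inr (Or.inr (Or.inl ⟨z * y, mul_ne_zero hz hy, this⟩))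
    · have : Iso (T23 1 (z • P23 + y • P31) P21 (An 0 0 0) (An 0 0 t23))
            (T23 1 (P23 + (z * y) • P31) P21 (An 0 0 0) (An 0 0 1)) := by
        apply isoC 1 _ _ _ _ _ _ _ _ ![![z * t23, 0], ![0, (z * t23) ^ 2]]
            ![![(z * t23) ^ 2, 0, 0], ![0, 1, 0], ![0, 0, z * t23 * z]] <;>
        simp [bil, ht, hz, P21, P31, P23, Fin.forall_fin_succ, Fin.sum_univ_three] <;> grind
      rw [An0, An23] at this
      rw [An0]
      exact Or.inr (Or.inr (Or.inr ⟨z * y, this⟩))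

theorem goodA1 {p1 q1 r1 p2 q2 r2 w12 w13 w23 t12 t13 t23 : ℂ}
    (hJ : JN (T23 1 (Lo p1 q1 r1) (Lo p2 q2 r2) (An w12 w13 w23) (An t12 t13 t23))) :
    Good (T23 1 (Lo p1 q1 r1) (Lo p2 q2 r2) (An w12 w13 w23) (An t12 t13 t23)) := by
  have k1 := congrFun (jR hJ.1 ![1, 0] ![1, 0] ![1, 0] ![0, 0, 1]) 0
  have k2 := congrFun (jR hJ.1 ![0, 1] ![1, 0] ![1, 0] ![0, 0, 1]) 0
  have k3 := congrFun (jC hJ.1 ![1, 0] ![1, 0] ![1, 0] ![0, 0, 1]) 0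
  simp [mE_T23, mR_T23, Lo, Fin.sum_univ_three] at k1 k2 k3
  have c1 : q1 * p2 = 0 := by grind
  have c2 : p1 * q2 = 0 := by grind
  have c3 : p2 * q2 = 0 := by grind
  clear k1 k2 k3
  by_cases hp : p2 = 0
  · by_cases hq : q2 = 0
    · by_cases hr : r2 = 0
      · subst hp hq hr
        rw [Lo0] at hJ ⊢
        exact goodR2 (Or.inr rfl) hJ
      · obtain ⟨_, _, _, _, _, _, hI⟩ := stdC hJ 1 (q1 • P23 + (p1 / r2) • P31) P21
          ![![1, - r1 / r2], ![0, 1]]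
          ![![r2, 0, 0], ![0, 0, 1], ![0, 1, 0]] (by simp) (by simp [hr]) (by simp)
          (by simp [hp, hq, hr, Lo, P23, P31, Fin.forall_fin_succ, Fin.sum_univ_three])
          (by simp [hp, hq, Lo, P21, Fin.forall_fin_succ, Fin.sum_univ_three])
        exact Good.of_iso hI (goodZY (jn_iso hI hJ))
    · have hp1 : p1 = 0 := by simpa [hq] using c2
      obtain ⟨_, _, _, _, _, _, hI⟩ := stdC hJ 1
          ((r1 - q1 * r2 / q2) • P23 + (0 : ℂ) • P31) P21 ![![1, - q1 / q2], ![0, 1]]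
          ![![r2, q2, 0], ![0, 0, 1], ![1, 0, 0]] (by simp) (by simp [hq]) (by simp)
          (by simp [hp, hp1, hq, Lo, P23, P31, Fin.forall_fin_succ, Fin.sum_univ_three]; try grind)
          (by simp [hp, Lo, P21, Fin.forall_fin_succ, Fin.sum_univ_three])
      exact Good.of_iso hI (goodZY (jn_iso hI hJ))
  · have hq1 : q1 = 0 := by simpa [hp] using c1
    have hq2 : q2 = 0 := by simpa [hp] using c3
    obtain ⟨_, _, _, _, _, _, hI⟩ := stdC hJ 1
          ((0 : ℂ) • P23 + ((r1 - p1 * r2 / p2) / p2) • P31) P21 ![![1, - p1 / p2], ![0, 1]]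
          ![![p2, 0, 0], ![0, 1, 0], ![0, - r2 / p2, 1]] (by simp) (by simp [hp]) (by simp)
          (by simp [hp, hq1, hq2, Lo, P23, P31, Fin.forall_fin_succ, Fin.sum_univ_three]; try grind)
          (by simp [hp, hq2, Lo, P21, Fin.forall_fin_succ, Fin.sum_univ_three]; try grind)
    exact Good.of_iso hI (goodZY (jn_iso hI hJ))

theorem good_main {μ : Tensor 2 3} (h1 : IsJordanSuper μ) (h2 : IsNilpotentT μ) : Good μ := by
  have hJ : JN μ := ⟨h1, nilX_of_nilpotent h2⟩
  obtain ⟨a, ha, _, _, _, _, _, _, _, _, _, _, _, _, hI⟩ := toG hJ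
  rcases ha with rfl | rfl
  · exact Good.of_iso hI (goodA0 (jn_iso hI hJ))
  · exact Good.of_iso hI (goodA1 (jn_iso hI hJ))

/-! ### Word invariants -/

/-- nonassociative words in even (`u`) and odd (`f`) letters -/
inductive Wd : Type
  | u : Wd
  | f : Wd
  | m : Wd → Wd → Wd

/-- span of all values of a word -/
def Img {m n : ℕ} (μ : Tensor m n) : Wd → Submodule ℂ (GV m n)
  | .u => Submodule.prod ⊤ ⊥
  | .f => Submodule.prod ⊥ ⊤
  | .m a b => Submodule.map₂ (mulL μ) (Img μ a) (Img μ b)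

theorem img_iso {m n : ℕ} {μ ν : Tensor m n} (h : Iso μ ν) (w : Wd) :
    Module.finrank ℂ (Img μ w) = Module.finrank ℂ (Img ν w) := by
  obtain ⟨T, S, h⟩ := h
  have key : ∀ w, (Img μ w).map (T.prodCongr S : GV m n →ₗ[ℂ] GV m n) = Img ν w := by
    intro w
    induction w with
    | u =>
      ext ⟨x, y⟩
      simp only [Img, Submodule.mem_map, Submodule.mem_prod, Submodule.mem_top, Submodule.mem_bot,
        true_and]
      constructor
      · rintro ⟨⟨a, b⟩, hb, he⟩
        simp at hb he
        rw [← he.2, hb, map_zero]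
      · intro hy
        exact ⟨(T.symm x, 0), rfl, by simp [hy]⟩
    | f =>
      ext ⟨x, y⟩
      simp only [Img, Submodule.mem_map, Submodule.mem_prod, Submodule.mem_top, Submodule.mem_bot,
        and_true]
      constructor
      · rintro ⟨⟨a, b⟩, hb, he⟩
        simp at hb he
        rw [← he.1, hb, map_zero]
      · intro hy
        exact ⟨(0, S.symm y), rfl, by simp [hy]⟩
    | m a b iha ihb =>
      rw [Img, Img, ← iha, ← ihb, Submodule.map_map₂]
      refine le_antisymm ?_ ?_
      · rw [Submodule.map₂_le]
        intro x hx y hy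
        have := h x y
        refine (show (T.prodCongr S) (mulOf μ x y) = _ from this) ▸ ?_
        exact Submodule.apply_mem_map₂ (mulL ν) (Submodule.mem_map_of_mem hx)
          (Submodule.mem_map_of_mem hy)
      · rw [Submodule.map₂_le]
        rintro _ ⟨x, hx, rfl⟩ _ ⟨y, hy, rfl⟩
        have e : mulL ν ((T.prodCongr S : GV m n →ₗ[ℂ] GV m n) x)
            ((T.prodCongr S : GV m n →ₗ[ℂ] GV m n) y) =
            ((mulL μ).compr₂ (T.prodCongr S : GV m n →ₗ[ℂ] GV m n)) x y := (h x y).symm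
        rw [e]
        exact Submodule.apply_mem_map₂
          ((mulL μ).compr₂ (T.prodCongr S : GV m n →ₗ[ℂ] GV m n)) hx hy
  rw [← key w]
  exact (LinearEquiv.finrank_map_eq (T.prodCongr S) (Img μ w)).symm

/-- homogeneous basis of the total space -/
def bb : Fin 5 → GV 2 3 := ![eps 0, eps 1, ph 0, ph 1, ph 2]

/-- coordinates in that basis -/
def co (x : GV 2 3) : Fin 5 → ℂ := ![x.1 0, x.1 1, x.2 0, x.2 1, x.2 2]

theorem co_sum (x : GV 2 3) : x = ∑ k, co x k • bb k := by
  ext k <;> fin_cases k <;> simp [co, bb, eps, ph, Fin.sum_univ_five]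

theorem co_bb (i j : Fin 5) : co (bb i) j = if i = j then 1 else 0 := by
  fin_cases i <;> fin_cases j <;> simp [co, bb, eps, ph]

theorem bb_li : LinearIndependent ℂ bb := by
  rw [Fintype.linearIndependent_iff]
  intro g hg i
  have : co (∑ k, g k • bb k) i = g i := by
    fin_cases i <;> simp [co, bb, eps, ph, Fin.sum_univ_five]
  rw [← this, hg]
  fin_cases i <;> simp [co]

/-- a code for the support of a tensor -/
structure Cd where
  a : Bool
  r1 : ℕ
  r2 : ℕ
  w : ℕ
  t : ℕ

/-- support of a 3×3 matrix as a bit mask -/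
def Supp (M : Fin 3 → Fin 3 → ℂ) (n : ℕ) : Prop :=
  ∀ i j : Fin 3, M i j ≠ 0 ↔ n.testBit (3 * i + j) = true

/-- support of a tensor -/
def Sup5 (μ : Tensor 2 3) (c : Cd) : Prop :=
  ∃ a R1 R2 W H, μ = T23 a R1 R2 W H ∧ (a ≠ 0 ↔ c.a = true) ∧ Supp R1 c.r1 ∧ Supp R2 c.r2 ∧
    Supp W c.w ∧ Supp H c.t

/-- which structure constants are nonzero -/
def rel (c : Cd) (i j k : Fin 5) : Bool :=
  if i.val < 2 then
    if j.val < 2 then (i.val == 0 && j.val == 0 && k.val == 1 && c.a)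
    else (Nat.ble 2 k.val &&
      (if i.val = 0 then c.r1 else c.r2).testBit (3 * (j.val - 2) + (k.val - 2)))
  else
    if j.val < 2 then (Nat.ble 2 k.val &&
      (if j.val = 0 then c.r1 else c.r2).testBit (3 * (i.val - 2) + (k.val - 2)))
    else (Nat.blt k.val 2 &&
      (if k.val = 0 then c.w else c.t).testBit (3 * (i.val - 2) + (j.val - 2)))

set_option maxHeartbeats 2000000 in
theorem rel_spec {μ : Tensor 2 3} {c : Cd} (h : Sup5 μ c) (i j k : Fin 5) :
    co (mulL μ (bb i) (bb j)) k ≠ 0 ↔ rel c i j k = true := by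
  obtain ⟨a, R1, R2, W, H, rfl, ha, h1, h2, h3, h4⟩ := h
  simp only [Supp, Fin.forall_fin_succ, Fin.forall_fin_zero] at h1 h2 h3 h4
  simp at h1 h2 h3 h4 ha
  obtain ⟨⟨a1, a2, a3⟩, ⟨a4, a5, a6⟩, a7, a8, a9⟩ := h1
  obtain ⟨⟨b1, b2, b3⟩, ⟨b4, b5, b6⟩, b7, b8, b9⟩ := h2
  obtain ⟨⟨c1, c2, c3⟩, ⟨c4, c5, c6⟩, c7, c8, c9⟩ := h3
  obtain ⟨⟨d1, d2, d3⟩, ⟨d4, d5, d6⟩, d7, d8, d9⟩ := h4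
  rw [mulL_apply]
  fin_cases i <;> fin_cases j <;> fin_cases k <;>
    simp [co, bb, eps, ph, mulOf, T23, Fin.sum_univ_three, Fin.sum_univ_two, rel, Nat.ble, Nat.blt]
  all_goals assumption

/-- at most one nonzero coordinate for each product of basis vectors -/
def mono (c : Cd) : Bool :=
  [0, 1, 2, 3, 4].all fun i => [0, 1, 2, 3, 4].all fun j => [0, 1, 2, 3, 4].all fun k =>
    [0, 1, 2, 3, 4].all fun l => !(rel c i j k && rel c i j l) || k == l

theorem mem5 : ∀ i : Fin 5, i ∈ ([0, 1, 2, 3, 4] : List (Fin 5)) := by decide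

theorem mono_spec {c : Cd} (h : mono c = true) (i j k l : Fin 5) (h1 : rel c i j k = true)
    (h2 : rel c i j l = true) : k = l := by
  simp only [mono, List.all_eq_true] at h
  have := h i (mem5 i) j (mem5 j) k (mem5 k) l (mem5 l)
  simpa [h1, h2] using this

/-- image of two coordinate subspaces -/
def imgM (c : Cd) (A B : ℕ) : ℕ :=
  Nat.ofBits fun k : Fin 5 => [0, 1, 2, 3, 4].any fun i : Fin 5 => A.testBit i.val &&
    [0, 1, 2, 3, 4].any fun j : Fin 5 => B.testBit j.val && rel c i j k

theorem imgM_spec (c : Cd) (A B : ℕ) (k : Fin 5) : (imgM c A B).testBit k = true ↔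
    ∃ i j : Fin 5, A.testBit i = true ∧ B.testBit j = true ∧ rel c i j k = true := by
  rw [imgM, Nat.testBit_ofBits_lt _ _ k.isLt]
  simp only [List.any_eq_true, Bool.and_eq_true]
  constructor
  · rintro ⟨i, -, hi, j, -, hj, h⟩; exact ⟨i, j, hi, hj, h⟩
  · rintro ⟨i, j, hi, hj, h⟩; exact ⟨i, mem5 i, hi, j, mem5 j, hj, h⟩

/-- coordinate subspace -/
def spanM (A : ℕ) : Submodule ℂ (GV 2 3) := Submodule.span ℂ (bb '' {i | A.testBit i = true})

/-- its dimension -/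
def pop (A : ℕ) : ℕ := (([0, 1, 2, 3, 4] : List (Fin 5)).filter fun i => A.testBit i.val).length

theorem finrank_spanM (A : ℕ) : Module.finrank ℂ (spanM A) = pop A := by
  have e : bb '' {i | A.testBit i = true} =
      Set.range (bb ∘ (Subtype.val : {i : Fin 5 // A.testBit i = true} → Fin 5)) := by
    ext x
    constructor
    · rintro ⟨i, hi, rfl⟩; exact ⟨⟨i, hi⟩, rfl⟩
    · rintro ⟨⟨i, hi⟩, rfl⟩; exact ⟨i, hi, rfl⟩
  rw [spanM, e, finrank_span_eq_card (bb_li.comp _ Subtype.val_injective), Fintype.card_subtype,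
    Finset.card_filter, Fin.sum_univ_five, pop]
  simp only [List.filter]
  generalize A.testBit _ = b0, A.testBit _ = b1, A.testBit _ = b2, A.testBit _ = b3,
    A.testBit _ = b4
  revert b0 b1 b2 b3 b4
  decide

theorem mem_spanM (A : ℕ) (x : GV 2 3) :
    x ∈ spanM A ↔ ∀ k : Fin 5, A.testBit k = false → co x k = 0 := by
  constructor
  · intro hx k hk
    induction hx using Submodule.span_induction with
    | mem x hx =>
      obtain ⟨i, hi, rfl⟩ := hx
      rw [co_bb, if_neg]
      rintro rfl
      simp [hk] at hi
    | zero => fin_cases k <;> simp [co]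
    | add x y _ _ h1 h2 =>
      have : co (x + y) k = co x k + co y k := by fin_cases k <;> simp [co]
      rw [this, h1, h2, add_zero]
    | smul a x _ h1 =>
      have : co (a • x) k = a * co x k := by fin_cases k <;> simp [co]
      rw [this, h1, mul_zero]
  · intro h
    rw [co_sum x]
    refine Submodule.sum_mem _ fun k _ => ?_
    cases hk : A.testBit k
    · rw [h k hk, zero_smul]; exact Submodule.zero_mem _
    · exact Submodule.smul_mem _ _ (Submodule.subset_span ⟨k, hk, rfl⟩)

theorem map_spanM {μ : Tensor 2 3} {c : Cd} (h : Sup5 μ c) (hm : mono c = true) (A B : ℕ) :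
    Submodule.map₂ (mulL μ) (spanM A) (spanM B) = spanM (imgM c A B) := by
  have key : ∀ i j k, rel c i j k = true →
      mulL μ (bb i) (bb j) = co (mulL μ (bb i) (bb j)) k • bb k := by
    intro i j k hk
    conv_lhs => rw [co_sum (mulL μ (bb i) (bb j))]
    refine Finset.sum_eq_single_of_mem k (Finset.mem_univ _) ?_
    intro l _ hl
    by_cases h0 : co (mulL μ (bb i) (bb j)) l = 0
    · rw [h0, zero_smul]
    · exact absurd (mono_spec hm i j l k ((rel_spec h i j l).1 h0) hk) hl
  rw [spanM, spanM, Submodule.map₂_span_span, spanM]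
  refine le_antisymm ?_ ?_
  · rw [Submodule.span_le]
    rintro _ ⟨_, ⟨i, hi, rfl⟩, _, ⟨j, hj, rfl⟩, rfl⟩
    by_cases h0 : ∃ k, rel c i j k = true
    · obtain ⟨k, hk⟩ := h0
      show mulL μ (bb i) (bb j) ∈ _
      rw [key i j k hk]
      refine Submodule.smul_mem _ _ (Submodule.subset_span ⟨k, ?_, rfl⟩)
      exact (imgM_spec c A B k).2 ⟨i, j, hi, hj, hk⟩
    · have : mulL μ (bb i) (bb j) = 0 := by
        rw [co_sum (mulL μ (bb i) (bb j))]
        refine Finset.sum_eq_zero fun l _ => ?_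
        by_cases h1 : co (mulL μ (bb i) (bb j)) l = 0
        · rw [h1, zero_smul]
        · exact absurd ⟨l, (rel_spec h i j l).1 h1⟩ h0
      show mulL μ (bb i) (bb j) ∈ _
      rw [this]
      exact Submodule.zero_mem _
  · rw [Submodule.span_le]
    rintro _ ⟨k, hk, rfl⟩
    obtain ⟨i, j, hi, hj, hr⟩ := (imgM_spec c A B k).1 hk
    have h0 := (rel_spec h i j k).2 hr
    have : bb k = (co (mulL μ (bb i) (bb j)) k)⁻¹ • mulL μ (bb i) (bb j) := by
      rw [eq_inv_smul_iff₀ h0]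
      exact (key i j k hr).symm
    rw [SetLike.mem_coe, this]
    exact Submodule.smul_mem _ _ (Submodule.subset_span ⟨_, ⟨i, hi, rfl⟩, _, ⟨j, hj, rfl⟩, rfl⟩)

/-- bit mask of the image of a word -/
def msk (c : Cd) : Wd → ℕ
  | .u => 3
  | .f => 28
  | .m a b => imgM c (msk c a) (msk c b)

theorem img_msk {μ : Tensor 2 3} {c : Cd} (h : Sup5 μ c) (hm : mono c = true) (w : Wd) :
    Img μ w = spanM (msk c w) := by
  induction w with
  | u =>
    ext ⟨x, y⟩
    rw [Img, msk, mem_spanM]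
    simp [Fin.forall_fin_succ, co, Nat.testBit, funext_iff]
  | f =>
    ext ⟨x, y⟩
    rw [Img, msk, mem_spanM]
    simp [Fin.forall_fin_succ, co, Nat.testBit, funext_iff]
  | m a b iha ihb => rw [Img, msk, iha, ihb, map_spanM h hm]

/-- the words that are used -/
def wds : List Wd :=
  [.m .f .u, .m .f .f, .m .u .u, .m (.m .f .f) .f, .m (.m .u .u) .f, .m (.m .f .f) .u,
    .m (.m .f .u) .u, .m (.m .f .u) .f, .m (.m (.m .f .u) .u) .f]

/-- dimensions of the images of the words -/
def sig (c : Cd) : List ℕ := wds.map fun w => pop (msk c w)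

theorem sig_iso {μ ν : Tensor 2 3} {c d : Cd} (h : Sup5 μ c) (hc : mono c = true) (h' : Sup5 ν d)
    (hd : mono d = true) (hI : Iso μ ν) : sig c = sig d := by
  rw [sig, sig]
  refine List.map_congr_left fun w _ => ?_
  rw [← finrank_spanM, ← finrank_spanM, ← img_msk h hc, ← img_msk h' hd, img_iso hI]

/-! ### Non-isomorphism -/

/-- codes: 0–40 for `A23`, then `A31`, `A43`, `A44 0`, `A44 p` with `p ≠ 0` -/
def cd : Fin 45 → Cd :=
  ![ ⟨false, 0, 0, 0, 0⟩, ⟨false, 0, 0, 10, 0⟩, ⟨false, 0, 0, 10, 68⟩, ⟨false, 8, 0, 0, 0⟩,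
     ⟨false, 8, 0, 0, 10⟩, ⟨false, 8, 0, 0, 160⟩, ⟨false, 8, 0, 0, 68⟩, ⟨false, 8, 0, 160, 0⟩,
     ⟨false, 8, 0, 160, 10⟩, ⟨false, 8, 0, 160, 68⟩, ⟨false, 8, 64, 0, 0⟩, ⟨false, 8, 64, 0, 160⟩,
     ⟨false, 8, 32, 0, 0⟩, ⟨false, 8, 32, 0, 10⟩, ⟨false, 8, 128, 0, 0⟩, ⟨false, 136, 0, 0, 0⟩,
     ⟨false, 136, 0, 0, 160⟩, ⟨false, 136, 0, 0, 68⟩, ⟨false, 136, 64, 0, 0⟩, ⟨false, 136, 64, 0, 160⟩,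
     ⟨true, 0, 0, 0, 0⟩, ⟨true, 0, 0, 10, 0⟩, ⟨true, 0, 0, 0, 10⟩, ⟨true, 0, 0, 10, 68⟩,
     ⟨true, 8, 0, 0, 0⟩, ⟨true, 8, 0, 0, 160⟩, ⟨true, 8, 0, 0, 10⟩, ⟨true, 8, 0, 0, 68⟩,
     ⟨true, 8, 0, 160, 0⟩, ⟨true, 8, 0, 160, 10⟩, ⟨true, 136, 0, 0, 0⟩, ⟨true, 136, 0, 0, 68⟩,
     ⟨true, 136, 0, 0, 160⟩, ⟨true, 0, 8, 0, 0⟩, ⟨true, 0, 8, 0, 160⟩, ⟨true, 0, 8, 160, 0⟩,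
     ⟨true, 8, 8, 160, 0⟩, ⟨true, 64, 8, 0, 0⟩, ⟨true, 64, 8, 0, 160⟩, ⟨true, 64, 8, 160, 0⟩,
     ⟨true, 32, 8, 0, 0⟩, ⟨true, 8, 0, 160, 68⟩, ⟨true, 96, 8, 0, 0⟩, ⟨true, 32, 8, 0, 160⟩,
     ⟨true, 96, 8, 0, 160⟩ ]

theorem cd_mono : ∀ i, mono (cd i) = true := by decide +kernel

/-- pairs not separated by `sig` -/
def res : List (Fin 45 × Fin 45) :=
  [(3, 10), (4, 6), (7, 11), (8, 9), (14, 15), (14, 18), (15, 18), (26, 27), (29, 41), (33, 37),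
    (34, 38), (36, 39), (43, 44)]

theorem sig_sep : ∀ i j : Fin 45, i < j → sig (cd i) = sig (cd j) → (i, j) ∈ res := by
  decide +kernel

theorem s0 : Supp 0 0 := by intro i j; simp
theorem s21 : Supp P21 8 := by
  intro i j; fin_cases i <;> fin_cases j <;> simp [P21, Nat.testBit]
theorem s32 : Supp P32 128 := by
  intro i j; fin_cases i <;> fin_cases j <;> simp [P32, Nat.testBit]
theorem s31 : Supp P31 64 := by
  intro i j; fin_cases i <;> fin_cases j <;> simp [P31, Nat.testBit]
theorem s23 : Supp P23 32 := by
  intro i j; fin_cases i <;> fin_cases j <;> simp [P23, Nat.testBit]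
theorem sN : Supp (P21 + P32) 136 := by
  intro i j; fin_cases i <;> fin_cases j <;> simp [P21, P32, Nat.testBit]
theorem sw12 : Supp W12 10 := by
  intro i j; fin_cases i <;> fin_cases j <;> simp [W12, Nat.testBit]
theorem sw13 : Supp W13 68 := by
  intro i j; fin_cases i <;> fin_cases j <;> simp [W13, Nat.testBit]
theorem sw23 : Supp W23 160 := by
  intro i j; fin_cases i <;> fin_cases j <;> simp [W23, Nat.testBit]
theorem sl13 {l : ℂ} (h : l ≠ 0) : Supp (l • W13) 68 := by
  intro i j; fin_cases i <;> fin_cases j <;> simp [W13, Nat.testBit, h]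
theorem sM {l : ℂ} (h : l ≠ 0) : Supp (P23 + l • P31) 96 := by
  intro i j; fin_cases i <;> fin_cases j <;> simp [P23, P31, Nat.testBit, h]

theorem sup_A23 (i : Fin 41) : Sup5 (A23 i) (cd (i.castLE (by norm_num))) := by
  fin_cases i <;>
  · refine ⟨_, _, _, _, _, rfl, ?_, ?_, ?_, ?_, ?_⟩
    · simp [cd]
    all_goals
      first
      | exact s0 | exact s21 | exact sw23 | exact sw12 | exact sw13 | exact s31 | exact s32
      | exact s23 | exact sN

theorem sup_A31 {l : ℂ} (h : l ≠ 0) : Sup5 (A31 l) (cd 41) :=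
  ⟨_, _, _, _, _, rfl, by simp [cd], s21, s0, sw23, sl13 h⟩

theorem sup_A43 {l : ℂ} (h : l ≠ 0) : Sup5 (A43 l) (cd 42) :=
  ⟨_, _, _, _, _, rfl, by simp [cd], sM h, s21, s0, s0⟩

theorem sup_A44 (l : ℂ) : Sup5 (A44 l) (cd 43) ∨ Sup5 (A44 l) (cd 44) := by
  by_cases h : l = 0
  · left
    subst h
    refine ⟨1, P23, P21, 0, W23, ?_, by simp [cd], s23, s21, s0, sw23⟩
    rw [A44, zero_smul, add_zero]
  · right
    exact ⟨_, _, _, _, _, rfl, by simp [cd], sM h, s21, s0, sw23⟩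

theorem sig_res {μ ν : Tensor 2 3} {i j : Fin 45} (h : Sup5 μ (cd i)) (h' : Sup5 ν (cd j))
    (hI : Iso μ ν) (hij : i < j) : (i, j) ∈ res :=
  sig_sep i j hij (sig_iso h (cd_mono i) h' (cd_mono j) hI)

/-! Finer invariants -/

/-- some nonzero even element acts trivially on the odd part -/
def InvK (μ : Tensor 2 3) : Prop := ∃ u, u ≠ 0 ∧ ∀ f, mR μ u f = 0
/-- even elements commute as operators -/
def InvC (μ : Tensor 2 3) : Prop := ∀ u v f, mR μ u (mR μ v f) = mR μ v (mR μ u f)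
/-- `u g = 0` implies `(u f) g = 0` -/
def InvH (μ : Tensor 2 3) : Prop := ∀ u f g, mR μ u g = 0 → mG μ (mR μ u f) g = 0
/-- if all `u² f = 0` then all `v f = 0` -/
def InvS (μ : Tensor 2 3) : Prop := ∀ f, (∀ u, mR μ (mE μ u u) f = 0) → ∀ v, mR μ v f = 0
/-- `[f,g] g = 0` implies `([f,g] f) g = l [f,g]²` -/
def InvL (l : ℂ) (μ : Tensor 2 3) : Prop := ∀ f g, mR μ (mG μ f g) g = 0 →
  mG μ (mR μ (mG μ f g) f) g = l • mE μ (mG μ f g) (mG μ f g)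
/-- `u (u f) = l (u² f)` -/
def InvP (l : ℂ) (μ : Tensor 2 3) : Prop := ∀ u f, mR μ u (mR μ u f) = l • mR μ (mE μ u u) f

theorem invK_iso {μ ν : Tensor 2 3} (hI : Iso μ ν) (h : InvK μ) : InvK ν := by
  obtain ⟨T, S, h1, h2, h3⟩ := iso_iff.1 hI
  obtain ⟨u, hu, h⟩ := h
  refine ⟨T u, by simpa using hu, fun f => ?_⟩
  obtain ⟨f, rfl⟩ := S.surjective f
  rw [← h2, h, map_zero]

theorem invC_iso {μ ν : Tensor 2 3} (hI : Iso μ ν) (h : InvC μ) : InvC ν := by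
  obtain ⟨T, S, h1, h2, h3⟩ := iso_iff.1 hI
  intro u v f
  obtain ⟨u, rfl⟩ := T.surjective u
  obtain ⟨v, rfl⟩ := T.surjective v
  obtain ⟨f, rfl⟩ := S.surjective f
  rw [← h2, ← h2, h, h2, h2]

theorem invH_iso {μ ν : Tensor 2 3} (hI : Iso μ ν) (h : InvH μ) : InvH ν := by
  obtain ⟨T, S, h1, h2, h3⟩ := iso_iff.1 hI
  intro u f g hg
  obtain ⟨u, rfl⟩ := T.surjective u
  obtain ⟨f, rfl⟩ := S.surjective f
  obtain ⟨g, rfl⟩ := S.surjective g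
  rw [← h2] at hg
  rw [← h2, ← h3, h _ _ _ (by simpa using hg), map_zero]

theorem invS_iso {μ ν : Tensor 2 3} (hI : Iso μ ν) (h : InvS μ) : InvS ν := by
  obtain ⟨T, S, h1, h2, h3⟩ := iso_iff.1 hI
  intro f hg v
  obtain ⟨v, rfl⟩ := T.surjective v
  obtain ⟨f, rfl⟩ := S.surjective f
  rw [← h2, h f (fun u => ?_), map_zero]
  have := hg (T u)
  rw [← h1, ← h2] at this
  simpa using this

theorem invL_iso {l : ℂ} {μ ν : Tensor 2 3} (hI : Iso μ ν) (h : InvL l μ) : InvL l ν := by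
  obtain ⟨T, S, h1, h2, h3⟩ := iso_iff.1 hI
  intro f g hg
  obtain ⟨f, rfl⟩ := S.surjective f
  obtain ⟨g, rfl⟩ := S.surjective g
  rw [← h3, ← h2] at hg
  rw [← h3, ← h2, ← h1, ← h3, h _ _ (by simpa using hg), map_smul]

theorem invP_iso {l : ℂ} {μ ν : Tensor 2 3} (hI : Iso μ ν) (h : InvP l μ) : InvP l ν := by
  obtain ⟨T, S, h1, h2, h3⟩ := iso_iff.1 hI
  intro u f
  obtain ⟨u, rfl⟩ := T.surjective u
  obtain ⟨f, rfl⟩ := S.surjective f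
  rw [← h1, ← h2, ← h2, ← h2, h, map_smul]

theorem mG_T (a : ℂ) (R1 R2 W H : Fin 3 → Fin 3 → ℂ) (x y : Fin 3 → ℂ) :
    mG (T23 a R1 R2 W H) x y =
      ![∑ i, ∑ j, x i * y j * W i j, ∑ i, ∑ j, x i * y j * H i j] := by
  ext k
  rw [mG_apply]
  fin_cases k <;> simp [T23]

/-! Values of the finer invariants -/

theorem K_P21 (W H : Fin 3 → Fin 3 → ℂ) : InvK (T23 0 P21 0 W H) := by
  refine ⟨![0, 1], fun h => by simpa using congrFun h 1, fun f => ?_⟩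
  rw [mR_T23]; ext k; simp

theorem K_N (W H : Fin 3 → Fin 3 → ℂ) : InvK (T23 0 (P21 + P32) 0 W H) := by
  refine ⟨![0, 1], fun h => by simpa using congrFun h 1, fun f => ?_⟩
  rw [mR_T23]; ext k; simp

theorem nK11 (W H : Fin 3 → Fin 3 → ℂ) : ¬ InvK (T23 0 P21 P31 W H) := by
  rintro ⟨u, hu, h⟩
  refine hu ?_
  have h1 := congrFun (h ![0, 1, 0]) 0
  have h2 := congrFun (h ![0, 0, 1]) 0
  simp [mR_T23, P21, P31, Fin.sum_univ_three] at h1 h2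
  ext k; fin_cases k <;> simp [h1, h2]

theorem nK15 (W H : Fin 3 → Fin 3 → ℂ) : ¬ InvK (T23 0 P21 P32 W H) := by
  rintro ⟨u, hu, h⟩
  refine hu ?_
  have h1 := congrFun (h ![0, 1, 0]) 0
  have h2 := congrFun (h ![0, 0, 1]) 1
  simp [mR_T23, P21, P32, Fin.sum_univ_three] at h1 h2
  ext k; fin_cases k <;> simp [h1, h2]

theorem nK19 (W H : Fin 3 → Fin 3 → ℂ) : ¬ InvK (T23 0 (P21 + P32) P31 W H) := by
  rintro ⟨u, hu, h⟩
  refine hu ?_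
  have h1 := congrFun (h ![0, 1, 0]) 0
  have h2 := congrFun (h ![0, 0, 1]) 0
  simp [mR_T23, P21, P32, P31, Fin.sum_univ_three] at h1 h2
  ext k; fin_cases k <;> simp [h1, h2]

theorem C19 (W H : Fin 3 → Fin 3 → ℂ) : InvC (T23 0 (P21 + P32) P31 W H) := by
  intro u v f
  ext k
  fin_cases k <;> simp [mR_T23, P21, P32, P31, Fin.sum_univ_three]
  ring

theorem nC15 (W H : Fin 3 → Fin 3 → ℂ) : ¬ InvC (T23 0 P21 P32 W H) := by
  intro h
  have := congrFun (h ![1, 0] ![0, 1] ![0, 0, 1]) 0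
  simp [mR_T23, P21, P32, Fin.sum_univ_three] at this

theorem H_W12 (a : ℂ) (l : ℂ) : InvH (T23 a P21 0 (l • W23) W12) := by
  intro u f g h
  have h1 := congrFun h 0
  simp [mR_T23, P21, Fin.sum_univ_three] at h1
  ext k
  fin_cases k <;> simp [mR_T23, mG_T, P21, W12, W23, Fin.sum_univ_three]
  grind

theorem nH_W13 (a : ℂ) (l : ℂ) (hl : l ≠ 0) (W : Fin 3 → Fin 3 → ℂ) :
    ¬ InvH (T23 a P21 0 W (l • W13)) := by
  intro h
  have := congrFun (h ![1, 0] ![0, 1, 0] ![0, 0, 1] (by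
    ext k; fin_cases k <;> simp [mR_T23, P21, Fin.sum_univ_three])) 1
  simp [mR_T23, mG_T, P21, W13, Fin.sum_univ_three, hl] at this

theorem S_35 (c : ℂ) (W H : Fin 3 → Fin 3 → ℂ) : InvS (T23 1 (c • P21) P21 W H) := by
  intro f h v
  have h1 := congrFun (h ![1, 0]) 0
  simp [mR_T23, mE_T23, P21, Fin.sum_univ_three] at h1
  ext k
  fin_cases k <;> simp [mR_T23, P21, Fin.sum_univ_three, h1]

theorem nS_39 (W H : Fin 3 → Fin 3 → ℂ) : ¬ InvS (T23 1 P31 P21 W H) := by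
  intro h
  have := congrFun (h ![0, 0, 1] (by
    intro u
    ext k; fin_cases k <;> simp [mE_T23, mR_T23, P21, P31, Fin.sum_univ_three]) ![1, 0]) 0
  simp [mR_T23, P21, P31, Fin.sum_univ_three] at this

theorem L_31 (l : ℂ) : InvL l (A31 l) := by
  intro f g h
  have h1 := congrFun h 0
  simp [A31, mR_T23, mG_T, P21, W13, W23, Fin.sum_univ_three] at h1
  ext k
  fin_cases k <;> simp [A31, mE_T23, mR_T23, mG_T, P21, W13, W23, Fin.sum_univ_three] <;> grind

theorem L_31' {l l' : ℂ} (h : InvL l (A31 l')) : l' = l := by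
  have := congrFun (h ![0, 1, 0] ![0, 0, 1] (by
    ext k; fin_cases k <;> simp [A31, mR_T23, mG_T, P21, W13, W23, Fin.sum_univ_three])) 1
  simpa [A31, mE_T23, mR_T23, mG_T, P21, W13, W23, Fin.sum_univ_three] using this

theorem P_43 (l : ℂ) (W H : Fin 3 → Fin 3 → ℂ) : InvP l (T23 1 (P23 + l • P31) P21 W H) := by
  intro u f
  ext k
  fin_cases k <;> simp [mE_T23, mR_T23, P21, P23, P31, Fin.sum_univ_three]
  ring

theorem P_43' {l l' : ℂ} {W H : Fin 3 → Fin 3 → ℂ}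
    (h : InvP l (T23 1 (P23 + l' • P31) P21 W H)) : l' = l := by
  have := congrFun (h ![1, 0] ![0, 1, 0]) 0
  simpa [mE_T23, mR_T23, P21, P23, P31, Fin.sum_univ_three] using this

theorem res_small : ∀ i j : Fin 41,
    ((i.castLE (by norm_num) : Fin 45), (j.castLE (by norm_num) : Fin 45)) ∈ res →
      (i = 3 ∧ j = 10) ∨ (i = 4 ∧ j = 6) ∨ (i = 7 ∧ j = 11) ∨ (i = 8 ∧ j = 9) ∨
      (i = 14 ∧ j = 15) ∨ (i = 14 ∧ j = 18) ∨ (i = 15 ∧ j = 18) ∨ (i = 26 ∧ j = 27) ∨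
      (i = 33 ∧ j = 37) ∨ (i = 34 ∧ j = 38) ∨ (i = 36 ∧ j = 39) := by
  decide +kernel

theorem res_A23 {i j : Fin 41} (hij : i < j) (hI : Iso (A23 i) (A23 j)) : False := by
  have h := sig_res (sup_A23 i) (sup_A23 j) hI hij
  have hc := res_small i j h
  have hs : ∀ (a : ℂ) W, ¬ InvH (T23 a P21 0 W W13) := fun a W => by
    simpa using nH_W13 a 1 one_ne_zero W
  have h0 : ∀ a : ℂ, InvH (T23 a P21 0 0 W12) := fun a => by simpa using H_W12 a 0
  have h1 : ∀ a : ℂ, InvH (T23 a P21 0 W23 W12) := fun a => by simpa using H_W12 a 1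
  have S0 : ∀ W H, InvS (T23 1 0 P21 W H) := fun W H => by simpa using S_35 0 W H
  have S1 : ∀ W H, InvS (T23 1 P21 P21 W H) := fun W H => by simpa using S_35 1 W H
  rcases hc with ⟨rfl, rfl⟩ | ⟨rfl, rfl⟩ | ⟨rfl, rfl⟩ | ⟨rfl, rfl⟩ | ⟨rfl, rfl⟩ | ⟨rfl, rfl⟩ |
    ⟨rfl, rfl⟩ | ⟨rfl, rfl⟩ | ⟨rfl, rfl⟩ | ⟨rfl, rfl⟩ | ⟨rfl, rfl⟩
  · exact nK11 _ _ (invK_iso hI (K_P21 _ _))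
  · exact hs _ _ (invH_iso hI (h0 _))
  · exact nK11 _ _ (invK_iso hI (K_P21 _ _))
  · exact hs _ _ (invH_iso hI (h1 _))
  · exact nK15 _ _ (invK_iso hI.symm' (K_N _ _))
  · exact nC15 _ _ (invC_iso hI.symm' (C19 _ _))
  · exact nK19 _ _ (invK_iso hI (K_N _ _))
  · exact hs _ _ (invH_iso hI (h0 _))
  · exact nS_39 _ _ (invS_iso hI (S0 _ _))
  · exact nS_39 _ _ (invS_iso hI (S0 _ _))
  · exact nS_39 _ _ (invS_iso hI (S1 _ _))

theorem no_31 (i : Fin 41) (l : ℂ) (hl : l ≠ 0) : ¬ Iso (A23 i) (A31 l) := by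
  intro hI
  have h := sig_res (sup_A23 i) (sup_A31 hl) hI (by simp [Fin.lt_def])
  have hc : i = 29 := by
    simp [res, Fin.ext_iff] at h ⊢
    omega
  subst hc
  have h1 : InvH (T23 1 P21 0 W23 W12) := by simpa using H_W12 1 1
  exact nH_W13 _ _ hl _ (invH_iso hI h1)

theorem no_43 (i : Fin 41) (l : ℂ) (hl : l ≠ 0) : ¬ Iso (A23 i) (A43 l) := by
  intro hI
  have h := sig_res (sup_A23 i) (sup_A43 hl) hI (by simp [Fin.lt_def]; omega)
  simp [res, Fin.ext_iff] at h

theorem no_44 (i : Fin 41) (l : ℂ) : ¬ Iso (A23 i) (A44 l) := by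
  intro hI
  rcases sup_A44 l with hs | hs
  · have h := sig_res (sup_A23 i) hs hI (by simp [Fin.lt_def]; omega)
    simp [res, Fin.ext_iff] at h
  · have h := sig_res (sup_A23 i) hs hI (by simp [Fin.lt_def]; omega)
    simp [res, Fin.ext_iff] at h
    omega

theorem no_31_43 (l g : ℂ) (hl : l ≠ 0) (hg : g ≠ 0) : ¬ Iso (A31 l) (A43 g) := by
  intro hI
  exact absurd (sig_res (sup_A31 hl) (sup_A43 hg) hI (by decide)) (by decide)

theorem no_31_44 (l p : ℂ) (hl : l ≠ 0) : ¬ Iso (A31 l) (A44 p) := by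
  intro hI
  rcases sup_A44 p with hs | hs
  · exact absurd (sig_res (sup_A31 hl) hs hI (by decide)) (by decide)
  · exact absurd (sig_res (sup_A31 hl) hs hI (by decide)) (by decide)

theorem no_43_44 (g p : ℂ) (hg : g ≠ 0) : ¬ Iso (A43 g) (A44 p) := by
  intro hI
  rcases sup_A44 p with hs | hs
  · exact absurd (sig_res (sup_A43 hg) hs hI (by decide)) (by decide)
  · exact absurd (sig_res (sup_A43 hg) hs hI (by decide)) (by decide)


/-- classification of nilpotent Jordan superalgebras of type (2,3):
every one is isomorphic to a listed superalgebra, and the listed superalgebras are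
pairwise non-isomorphic except within the three parametrized families, where
isomorphism holds exactly for equal parameters. -/
theorem stmt3 :
    (∀ μ : Tensor 2 3, IsJordanSuper μ → IsNilpotentT μ →
       (∃ i : Fin 41, Iso μ (A23 i)) ∨ (∃ l : ℂ, l ≠ 0 ∧ Iso μ (A31 l)) ∨
       (∃ g : ℂ, g ≠ 0 ∧ Iso μ (A43 g)) ∨ (∃ p : ℂ, Iso μ (A44 p))) ∧
    (∀ i j : Fin 41, Iso (A23 i) (A23 j) → i = j) ∧
    (∀ (i : Fin 41) (l : ℂ), l ≠ 0 → ¬ Iso (A23 i) (A31 l)) ∧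
    (∀ (i : Fin 41) (g : ℂ), g ≠ 0 → ¬ Iso (A23 i) (A43 g)) ∧
    (∀ (i : Fin 41) (p : ℂ), ¬ Iso (A23 i) (A44 p)) ∧
    (∀ l g : ℂ, l ≠ 0 → g ≠ 0 → ¬ Iso (A31 l) (A43 g)) ∧
    (∀ (l p : ℂ), l ≠ 0 → ¬ Iso (A31 l) (A44 p)) ∧
    (∀ (g p : ℂ), g ≠ 0 → ¬ Iso (A43 g) (A44 p)) ∧
    (∀ l₁ l₂ : ℂ, l₁ ≠ 0 → l₂ ≠ 0 → (Iso (A31 l₁) (A31 l₂) ↔ l₁ = l₂)) ∧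
    (∀ g₁ g₂ : ℂ, g₁ ≠ 0 → g₂ ≠ 0 → (Iso (A43 g₁) (A43 g₂) ↔ g₁ = g₂)) ∧
    (∀ p₁ p₂ : ℂ, Iso (A44 p₁) (A44 p₂) ↔ p₁ = p₂) := by
  refine ⟨fun μ h1 h2 => good_main h1 h2, ?_, no_31, no_43, no_44, no_31_43, no_31_44, no_43_44,
    ?_, ?_, ?_⟩
  · intro i j hI
    rcases lt_trichotomy i j with h | h | h
    · exact (res_A23 h hI).elim
    · exact h
    · exact (res_A23 h hI.symm').elim
  · intro l₁ l₂ _ _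
    refine ⟨fun hI => (L_31' (invL_iso hI (L_31 l₁))).symm, ?_⟩
    rintro rfl
    exact Iso.refl' _
  · intro l₁ l₂ _ _
    refine ⟨fun hI => (P_43' (invP_iso hI (P_43 l₁ 0 0))).symm, ?_⟩
    rintro rfl
    exact Iso.refl' _
  · intro l₁ l₂
    refine ⟨fun hI => (P_43' (invP_iso hI (P_43 l₁ 0 W23))).symm, ?_⟩
    rintro rfl
    exact Iso.refl' _

end
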